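/- arXiv:1206.0694 — 3 statements merged into one kernel-verified Lean document; each statement's English description precedes it below -/
import Mathlib

section
/- Let A be a C*-algebra and X a Banach A-bimodule. Then every Jordan derivation D : A → X, i.e., every linear map satisfying D(a²) = a·D(a) + D(a)·a for all a ∈ A (not assumed bounded), is automatically continuous. -/
open Filter Topology Polynomial

/-- `D` is a Jordan derivation from the unital algebra `A` into the unital Banach `A`-bimodule `X`
with left action `l a x = a · x` and right action `r a x = x · a`. -/
structure IsUnitalJordanDerivation {A X : Type*} [NormedRing A] [NormedAlgebra ℂ A]
    [NormedAddCommGroup X] [NormedSpace ℂ X]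
    (l r : A →L[ℂ] X →L[ℂ] X) (D : A →ₗ[ℂ] X) : Prop where
  left_one : ∀ x, l 1 x = x
  right_one : ∀ x, r 1 x = x
  left_mul : ∀ a b x, l (a * b) x = l a (l b x)
  right_mul : ∀ a b x, r (a * b) x = r b (r a x)
  comm : ∀ a b x, r b (l a x) = l a (r b x)
  map_sq : ∀ a, D (a * a) = l a (D a) + r a (D a)

/-- If the continuous linear maps `P k` annihilate each other and `D ∘ P k` is bounded in terms of
the graph norm of `D`, then some `D ∘ P k ∘ P k` is continuous. -/
theorem exists_continuous_comp_of_orthogonal {E F : Type*} [NormedAddCommGroup E] [NormedSpace ℂ E]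
    [CompleteSpace E] [NormedAddCommGroup F] [NormedSpace ℂ F] (D : E →ₗ[ℂ] F)
    (P : ℕ → E →L[ℂ] E) (hP : ∀ j k, j ≠ k → ∀ b, P k (P j b) = 0)
    (hD : ∀ k, ∃ C : ℝ, 0 ≤ C ∧ ∀ c, ‖D (P k c)‖ ≤ C * (‖c‖ + ‖D c‖)) :
    ∃ k, Continuous fun b => D (P k (P k b)) := by
  by_contra! hcon
  choose C hC0 hC using hD
  have hb : ∀ k, ∃ b, ‖P k b‖ ≤ (1 / 2 : ℝ) ^ k ∧ k * (1 + C k) < ‖D (P k (P k b))‖ := by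
    intro k
    by_contra! h
    apply hcon k
    set δ : ℝ := (1 / 2 : ℝ) ^ k / (‖P k‖ + 1) with hδ
    have hPk : 0 < ‖P k‖ + 1 := by positivity
    have hδ0 : 0 < δ := by positivity
    let T : E →ₗ[ℂ] F := D ∘ₗ ((P k) : E →ₗ[ℂ] E) ∘ₗ ((P k) : E →ₗ[ℂ] E)
    have := LinearMap.bound_of_ball_bound (𝕜 := ℂ) hδ0 (k * (1 + C k)) T (fun z hz => by
      apply h
      have hz' : ‖z‖ ≤ δ := by simpa using (mem_ball_zero_iff.mp hz).le
      calc ‖P k z‖ ≤ ‖P k‖ * ‖z‖ := (P k).le_opNorm z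
        _ ≤ (‖P k‖ + 1) * δ := by gcongr; linarith
        _ = (1 / 2 : ℝ) ^ k := by rw [hδ]; field_simp)
    obtain ⟨M, hM⟩ := this
    exact AddMonoidHomClass.continuous_of_bound T M hM
  choose b hb1 hb2 using hb
  have hsum : Summable fun k => P k (b k) :=
    Summable.of_norm_bounded summable_geometric_two hb1
  set c := ∑' k, P k (b k) with hc
  have hPc : ∀ k, P k c = P k (P k (b k)) := by
    intro k
    rw [hc, (P k).map_tsum hsum, tsum_eq_single k]
    intro j hj
    exact hP j k hj _
  obtain ⟨k, hk⟩ := exists_nat_gt (‖c‖ + ‖D c‖)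
  have h1 := hb2 k
  rw [← hPc k] at h1
  have h2 := hC k c
  have h3 : C k * (‖c‖ + ‖D c‖) ≤ C k * k := by
    have := hC0 k
    gcongr
  have h4 : (0 : ℝ) ≤ k := k.cast_nonneg
  nlinarith

namespace IsUnitalJordanDerivation

section Algebraic

variable {A X : Type*} [NormedRing A] [NormedAlgebra ℂ A] [NormedAddCommGroup X] [NormedSpace ℂ X]
  {l r : A →L[ℂ] X →L[ℂ] X} {D : A →ₗ[ℂ] X}

theorem map_mul_add_mul (h : IsUnitalJordanDerivation l r D) (a b : A) :
    D (a * b + b * a) = l a (D b) + r b (D a) + l b (D a) + r a (D b) := by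
  have h1 := h.map_sq (a + b)
  have e : (a + b) * (a + b) = a * a + (a * b + b * a) + b * b := by noncomm_ring
  rw [e, map_add, map_add, h.map_sq a, h.map_sq b] at h1
  simp only [map_add, add_apply] at h1 ⊢
  linear_combination (norm := module) h1

theorem map_triple (h : IsUnitalJordanDerivation l r D) (a b c : A) :
    D (a * b * c + c * b * a) = l a (l b (D c)) + l a (r c (D b)) + r c (r b (D a))
      + l c (l b (D a)) + l c (r a (D b)) + r a (r b (D c)) := by
  have e : (2 : ℂ) • (a * b * c + c * b * a) =
      (a * (b * c + c * b) + (b * c + c * b) * a) + ((a * b + b * a) * c + c * (a * b + b * a))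
      - ((a * c + c * a) * b + b * (a * c + c * a)) := by
    rw [two_smul]; noncomm_ring
  have h2 : (2 : ℂ) • D (a * b * c + c * b * a) =
      (2 : ℂ) • (l a (l b (D c)) + l a (r c (D b)) + r c (r b (D a))
      + l c (l b (D a)) + l c (r a (D b)) + r a (r b (D c))) := by
    rw [← map_smul, e, map_sub, map_add, h.map_mul_add_mul a, h.map_mul_add_mul (a * b + b * a) c,
      h.map_mul_add_mul (a * c + c * a) b, h.map_mul_add_mul a b, h.map_mul_add_mul b c,
      h.map_mul_add_mul a c]
    simp only [map_add, add_apply, h.left_mul, h.right_mul, h.comm]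
    module
  exact smul_right_injective _ (two_ne_zero (α := ℂ)) h2

theorem continuous_map_mul_mul_self (h : IsUnitalJordanDerivation l r D) {a : A}
    (ha : Continuous fun b => l a (D b)) : Continuous fun b => D (a * b * a) := by
  have e : (fun b => D (a * b * a)) = fun b => (2 : ℂ)⁻¹ • (l a (l b (D a)) + r a (l a (D b))
      + r a (r b (D a)) + l a (l b (D a)) + r a (l a (D b)) + r a (r b (D a))) := by
    funext b
    rw [h.comm, ← h.map_triple a b a, ← two_smul ℂ, map_smul, smul_smul]
    simp
  have h1 : Continuous fun b => r a (l a (D b)) := (r a).continuous.comp ha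
  have h2 : Continuous fun b => l a (l b (D a)) := by fun_prop
  have h3 : Continuous fun b => r a (r b (D a)) := by fun_prop
  rw [e]
  exact (((((h2.add h1).add h3).add h2).add h1).add h3).const_smul _

/-- The two-sided ideal of all `a` such that `b ↦ a · D b` and `b ↦ D b · a` are continuous. -/
def continuityIdeal (h : IsUnitalJordanDerivation l r D) : Ideal A where
  carrier := {a | (Continuous fun b => l a (D b)) ∧ Continuous fun b => r a (D b)}
  zero_mem' := by simp [continuous_const]
  add_mem' := by
    rintro a b ⟨h1, h2⟩ ⟨h3, h4⟩
    simp only [Set.mem_ofPred_eq, map_add, add_apply]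
    exact ⟨h1.add h3, h2.add h4⟩
  smul_mem' := by
    rintro c a ⟨h1, h2⟩
    simp only [Set.mem_ofPred_eq, smul_eq_mul, h.left_mul, h.right_mul]
    refine ⟨(l c).continuous.comp h1, ?_⟩
    have e : (fun b => r a (r c (D b))) = fun b =>
        r a (D (c * b + b * c)) - r a (r b (D c)) - r a (l b (D c)) - l c (r a (D b)) := by
      funext b
      simp only [h.map_mul_add_mul c b, map_add, h.comm]
      abel
    have h3 : Continuous fun b => r a (D (c * b + b * c)) :=
      h2.comp (g := fun b => r a (D b)) (f := fun b => c * b + b * c) (by fun_prop)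
    have h4 : Continuous fun b => r a (r b (D c)) := by fun_prop
    have h5 : Continuous fun b => r a (l b (D c)) := by fun_prop
    rw [e]
    exact ((h3.sub h4).sub h5).sub ((l c).continuous.comp h2)

variable (h : IsUnitalJordanDerivation l r D)

theorem mem_continuityIdeal {a : A} : a ∈ h.continuityIdeal ↔
    (Continuous fun b => l a (D b)) ∧ Continuous fun b => r a (D b) := Iff.rfl

instance : h.continuityIdeal.IsTwoSided where
  mul_mem_of_left := by
    rintro a c ⟨h1, h2⟩
    simp only [mem_continuityIdeal, h.left_mul, h.right_mul]
    refine ⟨?_, (r c).continuous.comp h2⟩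
    have e : (fun b => l a (l c (D b))) = fun b =>
        l a (D (c * b + b * c)) - l a (r b (D c)) - l a (l b (D c)) - r c (l a (D b)) := by
      funext b
      simp only [h.map_mul_add_mul c b, map_add, h.comm]
      abel
    have h3 : Continuous fun b => l a (D (c * b + b * c)) :=
      h1.comp (g := fun b => l a (D b)) (f := fun b => c * b + b * c) (by fun_prop)
    have h4 : Continuous fun b => l a (r b (D c)) := by fun_prop
    have h5 : Continuous fun b => l a (l b (D c)) := by fun_prop
    rw [e]
    exact ((h3.sub h4).sub h5).sub ((r c).continuous.comp h1)

theorem isClosed_continuityIdeal [CompleteSpace A] :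
    IsClosed (h.continuityIdeal : Set A) := by
  have key : ∀ T : A →L[ℂ] X →L[ℂ] X, IsClosed {a | Continuous fun b => T a (D b)} := by
    intro T
    refine IsSeqClosed.isClosed fun a c ha hac => ?_
    let g : ℕ → A →L[ℂ] X := fun n => ⟨(T (a n) : X →ₗ[ℂ] X) ∘ₗ D, ha n⟩
    have hg : Tendsto (fun n x => g n x) atTop (𝓝 fun b => T c (D b)) := by
      rw [tendsto_pi_nhds]
      intro b
      have : Continuous fun a => T a (D b) := by fun_prop
      exact (this.tendsto c).comp hac
    exact (continuousLinearMapOfTendsto g hg).continuous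
  exact (key l).inter (key r)

end Algebraic

section Orthogonal

variable {A X : Type*} [NormedRing A] [NormedAlgebra ℂ A]
  [NormedAddCommGroup X] [NormedSpace ℂ X] {l r : A →L[ℂ] X →L[ℂ] X} {D : A →ₗ[ℂ] X}

theorem exists_continuous_of_orthogonal [CompleteSpace A]
    (h : IsUnitalJordanDerivation l r D) (f g : ℕ → A)
    (hff : ∀ j k, j ≠ k → f j * f k = 0)
    (hfg : ∀ j k, j ≠ k →
      (f k * g j = 0 ∧ g j * f k = 0) ∨ (f j * g k = 0 ∧ g k * f j = 0)) :
    ∃ k, Continuous fun b => ((l (f k)).comp (r (g k)) + (l (g k)).comp (r (f k)))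
      (((l (f k)).comp (r (g k)) + (l (g k)).comp (r (f k))) (D b)) := by
  set Q : ℕ → X →L[ℂ] X := fun k => (l (f k)).comp (r (g k)) + (l (g k)).comp (r (f k)) with hQ
  let m : A → A → A →L[ℂ] A := fun a c =>
    (ContinuousLinearMap.mul ℂ A a).comp ((ContinuousLinearMap.mul ℂ A).flip c)
  let P : ℕ → A →L[ℂ] A := fun k => m (f k) (g k) + m (g k) (f k)
  have hPa : ∀ k b, P k b = f k * b * g k + g k * b * f k := by
    intro k b
    simp [P, m, mul_assoc]
  let S : ℕ → A →L[ℂ] X := fun k =>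
    (l (f k)).comp (l.flip (D (g k))) + (r (g k)).comp (r.flip (D (f k))) +
      (l (g k)).comp (l.flip (D (f k))) + (r (f k)).comp (r.flip (D (g k)))
  have hDP : ∀ k c, D (P k c) = Q k (D c) + S k c := by
    intro k c
    rw [hPa, h.map_triple]
    simp [Q, S]
    abel
  have horth : ∀ j k, j ≠ k → ∀ b, P k (P j b) = 0 := by
    intro j k hjk b
    have e : P k (P j b) = f k * f j * b * (g j * g k) + (f k * g j) * b * (f j * g k) +
        (g k * f j) * b * (g j * f k) + g k * g j * b * (f j * f k) := by
      rw [hPa, hPa]; noncomm_ring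
    rw [e, hff j k hjk, hff k j hjk.symm]
    rcases hfg j k hjk with ⟨h1, h2⟩ | ⟨h1, h2⟩ <;> simp [h1, h2]
  have hbound : ∀ k, ∃ C : ℝ, 0 ≤ C ∧ ∀ c, ‖D (P k c)‖ ≤ C * (‖c‖ + ‖D c‖) := by
    intro k
    refine ⟨‖Q k‖ + ‖S k‖, by positivity, fun c => ?_⟩
    rw [hDP]
    have h1 := (Q k).le_opNorm (D c)
    have h2 := (S k).le_opNorm c
    have h3 := norm_add_le (Q k (D c)) (S k c)
    have h4 : 0 ≤ ‖Q k‖ * ‖c‖ := by positivity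
    have h5 : 0 ≤ ‖S k‖ * ‖D c‖ := by positivity
    linarith
  obtain ⟨k, hk⟩ := exists_continuous_comp_of_orthogonal D P horth hbound
  refine ⟨k, ?_⟩
  have e : (fun b => Q k (Q k (D b))) = fun b => D (P k (P k b)) - S k (P k b) - Q k (S k b) := by
    funext b
    simp only [hDP, map_add]
    abel
  change Continuous fun b => Q k (Q k (D b))
  rw [e]
  exact (hk.sub (by fun_prop)).sub (by fun_prop)

theorem finite_not_continuous_of_orthogonal [CompleteSpace A]
    (h : IsUnitalJordanDerivation l r D) (f g : ℕ → A)
    (hff : ∀ j k, j ≠ k → f j * f k = 0)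
    (hfg : ∀ j k, j ≠ k →
      (f k * g j = 0 ∧ g j * f k = 0) ∨ (f j * g k = 0 ∧ g k * f j = 0)) :
    {k | ¬ Continuous fun b => ((l (f k)).comp (r (g k)) + (l (g k)).comp (r (f k)))
      (((l (f k)).comp (r (g k)) + (l (g k)).comp (r (f k))) (D b))}.Finite := by
  by_contra hinf
  let e := Set.Infinite.natEmbedding _ hinf
  have he : ∀ j k, j ≠ k → (e j : ℕ) ≠ e k := fun j k hjk hh =>
    hjk (e.injective (Subtype.ext hh))
  obtain ⟨k, hk⟩ := h.exists_continuous_of_orthogonal (fun k => f (e k)) (fun k => g (e k))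
    (fun j k hjk => hff _ _ (he j k hjk)) (fun j k hjk => hfg _ _ (he j k hjk))
  exact (e k).2 hk

theorem continuous_left_right_of_mul_eq_zero (h : IsUnitalJordanDerivation l r D) {f g y : A}
    (hfg : f * g = 0) (hgf : g * f = 0) (hyf : y * f = y) (hfy : f * y = y)
    (hc : Continuous fun b => ((l f).comp (r g) + (l g).comp (r f))
      (((l f).comp (r g) + (l g).comp (r f)) (D b))) :
    (Continuous fun b => l y (r (g * g) (D b))) ∧ Continuous fun b => r y (l (g * g) (D b)) := by
  have hyg : y * g = 0 := by rw [← hyf, mul_assoc, hfg, mul_zero]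
  have hgy : g * y = 0 := by rw [← hfy, ← mul_assoc, hgf, zero_mul]
  have h1 : ∀ x, l y (l f x) = l y x := fun x => by rw [← h.left_mul, hyf]
  have h2 : ∀ x, l y (l g x) = 0 := fun x => by rw [← h.left_mul, hyg]; simp
  have h3 : ∀ x, r y (r f x) = r y x := fun x => by rw [← h.right_mul, hfy]
  have h4 : ∀ x, r y (r g x) = 0 := fun x => by rw [← h.right_mul, hgy]; simp
  constructor
  · convert (l y).continuous.comp hc using 2 with b
    simp [h1, h2, h.right_mul, h.comm]
  · convert (r y).continuous.comp hc using 2 with b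
    simp [← h.comm, h3, h4, h.left_mul]

theorem continuous_left_right_of_mul_eq_self (h : IsUnitalJordanDerivation l r D) {f y : A}
    (hyf : y * f = y) (hfy : f * y = y)
    (hc : Continuous fun b => ((l f).comp (r f) + (l f).comp (r f))
      (((l f).comp (r f) + (l f).comp (r f)) (D b))) :
    (Continuous fun b => l y (r (f * f) (D b))) ∧ Continuous fun b => r y (l (f * f) (D b)) := by
  have h1 : ∀ x, l y (l f x) = l y x := fun x => by rw [← h.left_mul, hyf]
  have h3 : ∀ x, r y (r f x) = r y x := fun x => by rw [← h.right_mul, hfy]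
  constructor
  · convert ((l y).continuous.comp hc).const_smul (4 : ℂ)⁻¹ using 2 with b
    simp only [Function.comp, Pi.smul_apply, add_apply, ContinuousLinearMap.comp_apply, map_add,
      h.comm, h1, h.right_mul]
    module
  · convert ((r y).continuous.comp hc).const_smul (4 : ℂ)⁻¹ using 2 with b
    simp only [Function.comp, Pi.smul_apply, add_apply, ContinuousLinearMap.comp_apply, map_add,
      ← h.comm, h3, h.left_mul]
    module

theorem exists_mem_continuityIdeal_of_orthogonal [CompleteSpace A]
    (h : IsUnitalJordanDerivation l r D) (v z y : ℕ → A)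
    (hv : ∀ i j, i ≠ j → v i * v j = 0)
    (hvz : ∀ i, v i * z i = z i) (hzv : ∀ i, z i * v i = z i)
    (hzy : ∀ i, z i * y i = y i) (hyz : ∀ i, y i * z i = y i) :
    ∃ k, y k ∈ h.continuityIdeal := by
  have hzv0 : ∀ i j, i ≠ j → z i * v j = 0 := fun i j hij => by
    rw [← hzv i, mul_assoc, hv i j hij, mul_zero]
  have hvz0 : ∀ i j, i ≠ j → v j * z i = 0 := fun i j hij => by
    rw [← hvz i, ← mul_assoc, hv j i hij.symm, zero_mul]
  have hzz : ∀ i j, i ≠ j → z i * z j = 0 := fun i j hij => by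
    rw [← hzv i, mul_assoc, hvz0 j i hij.symm, mul_zero]
  let G : A → A → Prop := fun y w =>
    (Continuous fun b => l y (r w (D b))) ∧ Continuous fun b => r y (l w (D b))
  have hdiag : {k | ¬ G (y k) (v k * v k)}.Finite := by
    refine (h.finite_not_continuous_of_orthogonal v v hv
      fun j k hjk => .inl ⟨hv _ _ hjk.symm, hv _ _ hjk⟩).subset fun k hk hc => hk ?_
    refine h.continuous_left_right_of_mul_eq_self ?_ ?_ hc
    · rw [← hyz, mul_assoc, hzv]
    · rw [← hzy, ← mul_assoc, hvz]
  have hoff : ∀ i, {j | ¬ (i ≠ j ∧ G (y j) (v i * v i))}.Finite := by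
    intro i
    let f : ℕ → A := fun j => if j = i then 0 else z j
    have hf0 : ∀ k, f k * v i = 0 ∧ v i * f k = 0 := by
      intro k
      by_cases hk : k = i
      · simp [f, hk]
      · simp [f, hk, hzv0 k i hk, hvz0 k i hk]
    have hff : ∀ j k, j ≠ k → f j * f k = 0 := by
      intro j k hjk
      by_cases hj : j = i
      · simp [f, hj]
      · by_cases hk : k = i
        · simp [f, hk]
        · simp [f, hj, hk, hzz j k hjk]
    refine ((h.finite_not_continuous_of_orthogonal f (fun _ => v i) hff
      fun j k _ => .inl (hf0 k)).insert i).subset fun j hj => ?_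
    by_contra hj'
    simp only [Set.mem_insert_iff, Set.mem_ofPred_eq, not_or, not_not] at hj'
    have hfz : f j = z j := by simp [f, hj'.1]
    refine hj ⟨fun hij => hj'.1 hij.symm,
      h.continuous_left_right_of_mul_eq_zero (hf0 j).1 (hf0 j).2 ?_ ?_ hj'.2⟩
    · rw [hfz, hyz]
    · rw [hfz, hzy]
  obtain ⟨φ, hφ, hφ'⟩ := exists_seq_of_forall_finset_exists (fun k => G (y k) (v k * v k))
    (fun i j => i ≠ j ∧ G (y j) (v i * v i)) (fun s _ => by
      obtain ⟨j, hj⟩ := (hdiag.union (s.finite_toSet.biUnion fun i _ => hoff i)).exists_notMem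
      simp only [Set.mem_union, Set.mem_iUnion, Set.mem_ofPred_eq, not_or, not_exists,
        not_not] at hj
      exact ⟨j, hj.1, fun i hi => hj.2 i hi⟩)
  have hinj : ∀ i j, i ≠ j → φ i ≠ φ j := by
    intro i j hij
    rcases lt_or_gt_of_ne hij with hlt | hlt
    · exact (hφ' i j hlt).1
    · exact (hφ' j i hlt).1.symm
  let V : ℕ → A := fun n => ∑ i ∈ Finset.range (n + 1), v (φ i) * v (φ i)
  have hzV : ∀ m n, m ≤ n → z (φ m) * (1 - V n) = 0 ∧ (1 - V n) * z (φ m) = 0 := by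
    intro m n hmn
    have hm : m ∈ Finset.range (n + 1) := Finset.mem_range.mpr (by omega)
    constructor
    · rw [mul_sub, mul_one, Finset.mul_sum, Finset.sum_eq_single_of_mem m hm,
        ← mul_assoc, hzv, hzv, sub_self]
      intro i _ hi
      rw [← mul_assoc, hzv0 _ _ (hinj m i hi.symm), zero_mul]
    · rw [sub_mul, one_mul, Finset.sum_mul, Finset.sum_eq_single_of_mem m hm,
        mul_assoc, hvz, hvz, sub_self]
      intro i _ hi
      rw [mul_assoc, hvz0 _ _ (hinj m i hi.symm), mul_zero]
  obtain ⟨n, hn⟩ := h.exists_continuous_of_orthogonal (fun n => z (φ n)) (fun n => 1 - V n)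
    (fun j k hjk => hzz _ _ (hinj j k hjk)) (fun j k hjk => by
      rcases lt_or_gt_of_ne hjk with hlt | hlt
      · exact .inr (hzV j k hlt.le)
      · exact .inl (hzV k j hlt.le))
  obtain ⟨h1, h2⟩ := h.continuous_left_right_of_mul_eq_zero (hzV n n le_rfl).1 (hzV n n le_rfl).2
    (hyz _) (hzy _) hn
  have hG : ∀ i ∈ Finset.range (n + 1), G (y (φ n)) (v (φ i) * v (φ i)) := by
    intro i hi
    rcases (Nat.lt_succ_iff.mp (Finset.mem_range.mp hi)).lt_or_eq with hlt | rfl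
    · exact (hφ' i n hlt).2
    · exact hφ i
  have h3 : Continuous fun b => l (y (φ n)) (r (V n) (D b)) := by
    simp only [V, map_sum, sum_apply]
    exact continuous_finsetSum _ fun i hi => (hG i hi).1
  have h4 : Continuous fun b => r (y (φ n)) (l (V n) (D b)) := by
    simp only [V, map_sum, sum_apply]
    exact continuous_finsetSum _ fun i hi => (hG i hi).2
  refine ⟨φ n, ?_, ?_⟩
  · convert h1.add ((r (1 + (1 - V n))).continuous.comp h3) using 2 with b
    have e : (1 : A) = (1 - V n) * (1 - V n) + V n * (1 + (1 - V n)) := by noncomm_ring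
    rw [Pi.add_apply, Function.comp_apply, h.comm, ← h.right_mul, ← map_add, ← add_apply,
      ← map_add, ← e, h.right_one]
  · convert h2.add ((l (1 + (1 - V n))).continuous.comp h4) using 2 with b
    have e : (1 : A) = (1 - V n) * (1 - V n) + (1 + (1 - V n)) * V n := by noncomm_ring
    rw [Pi.add_apply, Function.comp_apply, ← h.comm, ← h.left_mul, ← map_add, ← add_apply,
      ← map_add, ← e, h.left_one]

end Orthogonal

end IsUnitalJordanDerivation

section MinimalIdempotent

/-- The idempotents `m` of the algebra `Q` with `m Q m = ℂ m`. -/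
def minimalIdempotents (Q : Type*) [Ring Q] [Algebra ℂ Q] : Set Q :=
  {m | m * m = m ∧ ∀ q, m * q * m ∈ Submodule.span ℂ {m}}

theorem exists_corner_subset_span_singleton {Q : Type*} [Ring Q] [Algebra ℂ Q]
    (hQ : ∀ x : Q, (∀ y, x * y * x = 0) → x = 0) {m n : Q} (hm : m ∈ minimalIdempotents Q)
    (hn : n ∈ minimalIdempotents Q) : ∃ x : Q, ∀ q, m * q * n ∈ Submodule.span ℂ {x} := by
  by_cases h : ∀ q, m * q * n = 0
  · exact ⟨0, fun q => by simp [h q]⟩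
  push Not at h
  obtain ⟨q₀, hq₀⟩ := h
  obtain ⟨y, hy⟩ : ∃ y, m * q₀ * n * y * (m * q₀ * n) ≠ 0 := by
    by_contra! h
    exact hq₀ (hQ _ h)
  refine ⟨m * q₀ * n, fun q => ?_⟩
  obtain ⟨ν, hν⟩ := Submodule.mem_span_singleton.mp (hn.2 (y * m * q₀))
  obtain ⟨μ, hμ⟩ := Submodule.mem_span_singleton.mp (hm.2 (q * n * y))
  have hn1 := hn.1
  have hm1 := hm.1
  have hν0 : ν ≠ 0 := by
    rintro rfl
    apply hy
    calc m * q₀ * n * y * (m * q₀ * n) = m * q₀ * (n * n) * y * (m * q₀ * n) := by rw [hn1]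
      _ = m * q₀ * n * (n * (y * m * q₀) * n) := by noncomm_ring
      _ = 0 := by rw [← hν]; simp
  have key : ν • (m * q * n) = μ • (m * q₀ * n) := by
    calc ν • (m * q * n) = m * q * (ν • n) := by rw [mul_smul_comm]
      _ = m * q * (n * (y * m * q₀) * n) := by rw [hν]
      _ = m * m * q * n * y * (m * m) * q₀ * n := by rw [hm1]; noncomm_ring
      _ = m * (m * (q * n * y) * m) * m * q₀ * n := by noncomm_ring
      _ = μ • (m * q₀ * n) := by rw [← hμ]; simp [hm1]
  refine Submodule.mem_span_singleton.mpr ⟨ν⁻¹ * μ, ?_⟩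
  rw [mul_smul, ← key, smul_smul, inv_mul_cancel₀ hν0, one_smul]

theorem finite_of_one_mem_span_minimalIdempotents {Q : Type*} [Ring Q] [Algebra ℂ Q]
    (hQ : ∀ x : Q, (∀ y, x * y * x = 0) → x = 0)
    (h1 : (1 : Q) ∈ Submodule.span ℂ (minimalIdempotents Q)) : Module.Finite ℂ Q := by
  obtain ⟨T, hT, h1T⟩ := Submodule.mem_span_finite_of_mem_span h1
  choose! x hx using fun (m : Q) (hm : m ∈ minimalIdempotents Q) (n : Q)
    (hn : n ∈ minimalIdempotents Q) => exists_corner_subset_span_singleton hQ hm hn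
  refine Module.finite_def.mpr (Submodule.fg_def.mpr ⟨Set.image2 x T T,
    T.finite_toSet.image2 _ T.finite_toSet, ?_⟩)
  rw [eq_top_iff]
  intro b _
  have hleft : ∀ m ∈ T, ∀ v ∈ Submodule.span ℂ (T : Set Q),
      m * b * v ∈ Submodule.span ℂ (Set.image2 x T T) := by
    intro m hm v hv
    induction hv using Submodule.span_induction with
    | mem n hn =>
      refine Submodule.span_mono ?_ (hx m (hT hm) n (hT hn) b)
      exact Set.singleton_subset_iff.mpr (Set.mem_image2_of_mem hm hn)
    | zero => simp
    | add v w _ _ h h' => rw [mul_add]; exact add_mem h h'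
    | smul c v _ h => rw [mul_smul_comm]; exact Submodule.smul_mem _ _ h
  have hboth : ∀ u ∈ Submodule.span ℂ (T : Set Q),
      u * b * 1 ∈ Submodule.span ℂ (Set.image2 x T T) := by
    intro u hu
    induction hu using Submodule.span_induction with
    | mem m hm => exact hleft m hm 1 h1T
    | zero => simp
    | add v w _ _ h h' => rw [add_mul, add_mul]; exact add_mem h h'
    | smul c v _ h => rw [smul_mul_assoc, smul_mul_assoc]; exact Submodule.smul_mem _ _ h
  simpa using hboth 1 h1T

variable {A Q : Type*} [Ring A] [StarRing A] [Algebra ℂ A] [StarModule ℂ A] [Ring Q] [Algebra ℂ Q]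
  {π : A →ₐ[ℂ] Q}

theorem commute_aeval_of_commute {x p : Q} (h : Commute x p) (g : ℝ[X]) :
    Commute (aeval x g) p := by
  induction g using Polynomial.induction_on' with
  | add g g' hg hg' => simpa using hg.add_left hg'
  | monomial n c =>
    rw [aeval_monomial]
    exact (Algebra.commute_algebraMap_left c p).mul_left (h.pow_left n)

theorem IsSelfAdjoint.aeval_real {a : A} (ha : IsSelfAdjoint a) (g : ℝ[X]) :
    IsSelfAdjoint (aeval a g) := by
  induction g using Polynomial.induction_on' with
  | add g g' hg hg' => simpa using hg.add hg'
  | monomial n c =>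
    rw [aeval_monomial, ← Algebra.smul_def]
    exact (IsSelfAdjoint.all c).smul (ha.pow n)

theorem exists_split_idempotent (hπ : Function.Surjective π)
    (halg : ∀ a : A, IsSelfAdjoint a →
      ∃ R : Finset ℝ, aeval (π a) (Lagrange.nodal R (id : ℝ → ℝ)) = 0)
    {e : A} (he : IsSelfAdjoint e) (hee : π e * π e = π e)
    (hspan : π e ∉ Submodule.span ℂ (minimalIdempotents Q)) :
    ∃ e' : A, IsSelfAdjoint e' ∧ π e' * π e' = π e' ∧ π e' * π e = π e' ∧ π e * π e' = π e' ∧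
      π e' ≠ 0 ∧ π e - π e' ∉ Submodule.span ℂ (minimalIdempotents Q) := by
  classical
  obtain ⟨a, ha, hae⟩ : ∃ a : A, IsSelfAdjoint a ∧
      π e * π a * π e ∉ Submodule.span ℂ {π e} := by
    by_contra! h
    refine hspan (Submodule.subset_span ⟨hee, fun q => ?_⟩)
    obtain ⟨b, rfl⟩ := hπ q
    rw [← realPart_add_I_smul_imaginaryPart b, map_add, map_smul, mul_add, add_mul,
      mul_smul_comm, smul_mul_assoc]
    exact add_mem (h _ (realPart b).2) (Submodule.smul_mem _ _ (h _ (imaginaryPart b).2))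
  set p := π e with hp
  set x := p * π a * p with hx
  have hpx : p * x = x := by rw [hx, ← mul_assoc, ← mul_assoc, hee]
  have hxp : x * p = x := by rw [hx, mul_assoc, hee]
  have hsa : IsSelfAdjoint (e * a * e) := by
    simpa [he.star_eq] using ha.conjugate e
  have hπx : π (e * a * e) = x := by simp [hx, hp]
  obtain ⟨R₀, hR₀⟩ := halg _ hsa
  rw [hπx] at hR₀
  let R := insert 0 R₀
  have hR : aeval x (Lagrange.nodal R (id : ℝ → ℝ)) = 0 := by
    by_cases h0 : (0 : ℝ) ∈ R₀
    · simpa [R, h0] using hR₀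
    · rw [Lagrange.nodal_insert_eq_nodal h0, map_mul, hR₀, mul_zero]
  let f : ℝ → ℝ[X] := fun t => Lagrange.basis R id t
  have hcomm : ∀ g : ℝ[X], aeval x g * p = p * aeval x g := fun g =>
    (commute_aeval_of_commute (show Commute x p from hxp.trans hpx.symm) g).eq
  have hsum : p = ∑ t ∈ R, aeval x (f t) * p := by
    rw [← Finset.sum_mul, ← map_sum, Lagrange.sum_basis (Set.injOn_id _) ⟨0, by simp [R]⟩]
    simp
  obtain ⟨t, htR, ht⟩ : ∃ t ∈ R, aeval x (f t) * p ∉ Submodule.span ℂ (minimalIdempotents Q) := by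
    by_contra! h
    exact hspan (hsum ▸ Submodule.sum_mem _ h)
  have hz : aeval x (f t * (X - C t)) = 0 := by
    have : f t * (X - C t) = C (Lagrange.nodalWeight R id t) * Lagrange.nodal R id := by
      rw [Lagrange.nodal_eq_mul_nodal_erase htR, Lagrange.nodal_erase_eq_nodal_div htR]
      simp only [f, Lagrange.basis_eq_prod_sub_inv_mul_nodal_div htR]
      simp only [id]
      ring
    rw [this, map_mul, hR, mul_zero]
  have hxf : aeval x (f t) * x = t • aeval x (f t) := by
    rw [map_mul, map_sub, aeval_X, aeval_C, mul_sub, sub_eq_zero] at hz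
    rw [hz, ← Algebra.commutes, Algebra.smul_def]
  have hff : aeval x (f t) * aeval x (f t) = aeval x (f t) := by
    obtain ⟨g, hg⟩ : X - C t ∣ f t - 1 := by
      rw [dvd_iff_isRoot]
      simpa [sub_eq_zero] using Lagrange.eval_basis_self (Set.injOn_id _) htR
    have : f t * f t = f t + f t * (X - C t) * g := by rw [mul_assoc, ← hg]; ring
    rw [← map_mul, this, map_add, map_mul, hz, zero_mul, add_zero]
  have hft : π (e - e * aeval (e * a * e) (f t) * e) = p - aeval x (f t) * p := by
    have : π (aeval (e * a * e) (f t)) = aeval x (f t) := by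
      rw [← hπx]
      exact (aeval_algHom_apply (π.restrictScalars ℝ) _ _).symm
    rw [map_sub, map_mul, map_mul, this, ← hcomm, mul_assoc, hee]
  refine ⟨e - e * aeval (e * a * e) (f t) * e, ?_, ?_, ?_, ?_, ?_, ?_⟩
  · refine he.sub ?_
    simpa [he.star_eq] using (hsa.aeval_real (f t)).conjugate e
  · have h : aeval x (f t) * p * (aeval x (f t) * p) = aeval x (f t) * p := by
      rw [mul_assoc, ← mul_assoc p, ← hcomm, mul_assoc, hee, ← mul_assoc, hff]
    rw [hft, mul_sub, sub_mul, sub_mul, hee, h, mul_assoc (aeval x (f t)), hee, ← mul_assoc,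
      ← hcomm, mul_assoc, hee]
    abel
  · rw [hft, sub_mul, mul_assoc, hee]
  · rw [hft, mul_sub, hcomm, ← mul_assoc, hee]
  · rw [hft]
    intro h
    apply hae
    refine Submodule.mem_span_singleton.mpr ⟨(t : ℂ), ?_⟩
    have hp' := sub_eq_zero.mp h
    calc (t : ℂ) • p = t • (aeval x (f t) * p) := by rw [← hp', Complex.coe_smul]
      _ = aeval x (f t) * p * x := by rw [← smul_mul_assoc, ← hxf, mul_assoc _ x p,
          mul_assoc _ p x, hxp, hpx]
      _ = x := by rw [← hp', hpx]
  · rw [hft]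
    simpa using ht

theorem one_mem_span_minimalIdempotents (hπ : Function.Surjective π)
    (halg : ∀ a : A, IsSelfAdjoint a →
      ∃ R : Finset ℝ, aeval (π a) (Lagrange.nodal R (id : ℝ → ℝ)) = 0)
    (hseq : ∀ e : ℕ → A, (∀ n, IsSelfAdjoint (e n)) → (∀ n, π (e n) * π (e n) = π (e n)) →
      (∀ m n, m ≠ n → π (e m) * π (e n) = 0) → ∃ n, π (e n) = 0) :
    (1 : Q) ∈ Submodule.span ℂ (minimalIdempotents Q) := by
  by_contra h1
  let S := {e : A // IsSelfAdjoint e ∧ π e * π e = π e ∧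
    π e ∉ Submodule.span ℂ (minimalIdempotents Q)}
  have step : ∀ s : S, ∃ e' : A, IsSelfAdjoint e' ∧ π e' * π e' = π e' ∧ π e' * π s.1 = π e' ∧
      π s.1 * π e' = π e' ∧ π e' ≠ 0 ∧
      π s.1 - π e' ∉ Submodule.span ℂ (minimalIdempotents Q) :=
    fun s => exists_split_idempotent hπ halg s.2.1 s.2.2.1 s.2.2.2
  choose E hE1 hE2 hE3 hE4 hE5 hE6 using step
  let next : S → S := fun s => ⟨s.1 - E s, s.2.1.sub (hE1 s), by
    simp only [map_sub, sub_mul, mul_sub, s.2.2.1, hE2, hE3, hE4]; abel, by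
    simpa using hE6 s⟩
  let s : ℕ → S := fun n => next^[n] ⟨1, IsSelfAdjoint.one A, by simp, by simpa using h1⟩
  have hs : ∀ n, π (s (n + 1)).1 = π (s n).1 - π (E (s n)) := by
    intro n
    simp only [s, Function.iterate_succ_apply']
    simp [next]
  have hle : ∀ n k, π (s n).1 * π (s (n + k)).1 = π (s (n + k)).1 ∧
      π (s (n + k)).1 * π (s n).1 = π (s (n + k)).1 := by
    intro n k
    induction k with
    | zero => exact ⟨(s n).2.2.1, (s n).2.2.1⟩
    | succ k ih =>
      have h1 : π (s n).1 * π (E (s (n + k))) = π (E (s (n + k))) := by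
        rw [← hE4 (s (n + k)), ← mul_assoc, ih.1]
      have h2 : π (E (s (n + k))) * π (s n).1 = π (E (s (n + k))) := by
        rw [← hE3 (s (n + k)), mul_assoc, ih.2]
      rw [← add_assoc, hs, mul_sub, sub_mul, ih.1, ih.2, h1, h2]
      exact ⟨rfl, rfl⟩
  have hlt : ∀ m n, m < n → π (E (s m)) * π (E (s n)) = 0 ∧ π (E (s n)) * π (E (s m)) = 0 := by
    intro m n hmn
    obtain ⟨k, rfl⟩ := Nat.exists_eq_add_of_le (Nat.succ_le_of_lt hmn)
    have h1 : π (E (s m)) * π (s (m + 1)).1 = 0 := by rw [hs, mul_sub, hE3, hE2, sub_self]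
    have h2 : π (s (m + 1)).1 * π (E (s m)) = 0 := by rw [hs, sub_mul, hE4, hE2, sub_self]
    constructor
    · rw [← hE4 (s (m + 1 + k)), ← (hle (m + 1) k).1, ← mul_assoc, ← mul_assoc, h1]
      simp
    · rw [← hE3 (s (m + 1 + k)), ← (hle (m + 1) k).2, mul_assoc, mul_assoc, h2]
      simp
  obtain ⟨n, hn⟩ := hseq (fun n => E (s n)) (fun n => hE1 _) (fun n => hE2 _) (fun m n hmn => by
    rcases lt_or_gt_of_ne hmn with h | h
    · exact (hlt m n h).1
    · exact (hlt n m h).2)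
  exact hE5 _ hn

end MinimalIdempotent

section CStarIdeal

variable {A : Type*} [CStarAlgebra A]

theorem cfc_mem_of_isClosed {J : Ideal A} (hJ : IsClosed (J : Set A)) {b : A}
    (hb : IsSelfAdjoint b) (hbJ : b ∈ J) {f : ℝ → ℝ} (hf : Continuous f) (hf0 : f 0 = 0) :
    cfc f b ∈ J := by
  rw [← SetLike.mem_coe, ← hJ.closure_eq, Metric.mem_closure_iff]
  intro ε hε
  have hspec : ∀ x ∈ spectrum ℝ b, x ∈ Set.Icc (-‖b‖) ‖b‖ := fun x hx => by
    have := norm_apply_le_norm_cfc (id : ℝ → ℝ) b hx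
    rw [cfc_id ℝ b] at this
    exact abs_le.mp this
  obtain ⟨p, hp⟩ := exists_polynomial_near_of_continuousOn (-‖b‖) ‖b‖ f hf.continuousOn (ε / 2)
    (half_pos hε)
  obtain ⟨q, hq⟩ : X ∣ p - C (p.eval 0) := by
    rw [X_dvd_iff, coeff_zero_eq_eval_zero]
    simp
  refine ⟨aeval b (p - C (p.eval 0)), ?_, ?_⟩
  · rw [hq, mul_comm, map_mul, aeval_X]
    exact J.mul_mem_left _ hbJ
  · rw [dist_eq_norm, ← cfc_polynomial _ b, ← cfc_sub ..]
    refine norm_cfc_lt hε fun x hx => ?_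
    have h1 := hp x (hspec x hx)
    have h2 := hp 0 ⟨by simp, by simp⟩
    rw [hf0, sub_zero] at h2
    rw [abs_lt] at h1 h2
    rw [Real.norm_eq_abs, eval_sub, eval_C, abs_lt]
    constructor <;> linarith

theorem cfc_sqrt_sqrt_mem_of_isClosed {J : Ideal A} (hJ : IsClosed (J : Set A)) {b : A}
    (hb : IsSelfAdjoint b) (hbJ : b ∈ J) : cfc (fun t => √(√t)) b ∈ J :=
  cfc_mem_of_isClosed hJ hb hbJ (Real.continuous_sqrt.comp Real.continuous_sqrt) (by simp)

variable [PartialOrder A] [StarOrderedRing A]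

theorem norm_cfc_mul_le_of_mul_star_le {a b : A} (hab : a * star a ≤ b) {f : ℝ → ℝ}
    (hf : Continuous f) {c : ℝ} (hc : 0 ≤ c) (h : ∀ t, 0 ≤ t → t ≤ ‖b‖ → t * f t ^ 2 ≤ c ^ 2) :
    ‖cfc f b * a‖ ≤ c := by
  have hb : 0 ≤ b := (mul_star_self_nonneg a).trans hab
  have hb' : IsSelfAdjoint b := .of_nonneg hb
  have hfb : IsSelfAdjoint (cfc f b) := cfc_predicate f b
  refine abs_le_of_sq_le_sq' ?_ hc |>.2
  have h1 : cfc f b * a * star (cfc f b * a) ≤ cfc f b * b * cfc f b := by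
    have := star_right_conjugate_le_conjugate hab (cfc f b)
    rwa [hfb.star_eq, ← mul_assoc, mul_assoc (cfc f b * a), ← hfb.star_eq, ← star_mul,
      hfb.star_eq] at this
  have h2 : cfc f b * b * cfc f b = cfc (fun t => f t * t * f t) b := by
    rw [cfc_mul .., cfc_mul .., cfc_id' ℝ b]
  calc ‖cfc f b * a‖ ^ 2 = ‖cfc f b * a * star (cfc f b * a)‖ := by
        rw [CStarRing.norm_self_mul_star, sq]
    _ ≤ ‖cfc f b * b * cfc f b‖ :=
        CStarAlgebra.norm_le_norm_of_nonneg_of_le (mul_star_self_nonneg _) h1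
    _ ≤ c ^ 2 := by
        rw [h2]
        refine norm_cfc_le (sq_nonneg c) fun t ht => ?_
        have ht0 : 0 ≤ t := spectrum_nonneg_of_nonneg hb ht
        have hts := norm_apply_le_norm_cfc (id : ℝ → ℝ) b ht
        rw [cfc_id ℝ b, id, Real.norm_of_nonneg ht0] at hts
        rw [Real.norm_of_nonneg (by nlinarith [mul_nonneg ht0 (sq_nonneg (f t))])]
        linarith [h t ht0 hts]

/-- A factorization of `a` through the fourth root of any `b ≥ a a*`. -/
theorem exists_eq_cfc_sqrt_sqrt_mul {a b : A} (hab : a * star a ≤ b) :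
    ∃ u, a = cfc (fun t => √(√t)) b * u ∧ ‖u‖ ≤ √(√‖b‖) ∧
      ∀ J : Ideal A, IsClosed (J : Set A) → a ∈ J → u ∈ J := by
  have hb : 0 ≤ b := (mul_star_self_nonneg a).trans hab
  have hb' : IsSelfAdjoint b := .of_nonneg hb
  let e : ℕ → ℝ := fun n => 1 / ((n : ℝ) + 1)
  have he0 : ∀ n, 0 < e n := fun n => by positivity
  have hlim : Tendsto e atTop (𝓝 0) := tendsto_one_div_add_atTop_nhds_zero_nat
  let g : ℕ → ℝ → ℝ := fun n t => (max (√(√t)) (e n))⁻¹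
  have hg : ∀ n, Continuous (g n) := fun n =>
    (((Real.continuous_sqrt.comp Real.continuous_sqrt).max continuous_const).inv₀
      fun t => ((he0 n).trans_le (le_max_right _ _)).ne')
  have hroot : ∀ t : ℝ, 0 ≤ t → t = √(√t) ^ 4 := fun t ht => by
    rw [show (4 : ℕ) = 2 * 2 from rfl, pow_mul, Real.sq_sqrt (by positivity), Real.sq_sqrt ht]
  have hgs : ∀ n t, 0 ≤ √(√t) * g n t ∧ √(√t) * g n t ≤ 1 := fun n t => by
    have h0 : 0 < max (√(√t)) (e n) := (he0 n).trans_le (le_max_right _ _)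
    refine ⟨by positivity, ?_⟩
    rw [← div_eq_mul_inv, div_le_one h0]
    exact le_max_left _ _
  have hgeq : ∀ n t, e n < √(√t) → g n t = (√(√t))⁻¹ := fun n t h => by
    simp only [g, max_eq_left h.le]
  let u : ℕ → A := fun n => cfc (g n) b * a
  have hcauchy : CauchySeq u := by
    refine cauchySeq_of_le_tendsto_0 e (fun n m N hn hm => ?_) hlim
    have hanti : Antitone e := fun i j hij => by
      simp only [e]; gcongr
    rw [dist_eq_norm, ← sub_mul, ← cfc_sub (g n) (g m) b (hg n).continuousOn (hg m).continuousOn]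
    refine norm_cfc_mul_le_of_mul_star_le (f := fun t => g n t - g m t) hab
      ((hg n).sub (hg m)) (he0 N).le fun t ht _ => ?_
    rcases lt_or_ge (e N) (√(√t)) with h | h
    · rw [hgeq n t ((hanti hn).trans_lt h), hgeq m t ((hanti hm).trans_lt h)]
      simp [sq_nonneg]
    · have h1 := hgs n t
      have h2 := hgs m t
      have h3 : (√(√t) * g n t - √(√t) * g m t) ^ 2 ≤ 1 := by
        rw [sq_le_one_iff_abs_le_one, abs_le]; constructor <;> linarith
      calc t * (g n t - g m t) ^ 2
          = √(√t) ^ 2 * (√(√t) * g n t - √(√t) * g m t) ^ 2 := by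
            linear_combination (g n t - g m t) ^ 2 * hroot t ht
        _ ≤ e N ^ 2 * 1 := by gcongr
        _ = e N ^ 2 := mul_one _
  obtain ⟨v, hv⟩ := cauchySeq_tendsto_of_complete hcauchy
  refine ⟨v, ?_, ?_, ?_⟩
  · have hφ : Continuous fun t : ℝ => √(√t) := Real.continuous_sqrt.comp Real.continuous_sqrt
    refine tendsto_nhds_unique ?_ (hv.const_mul (cfc (fun t => √(√t)) b))
    rw [tendsto_iff_norm_sub_tendsto_zero]
    refine squeeze_zero (fun _ => norm_nonneg _) (fun n => ?_)
      (show Tendsto (fun n => e n ^ 2) atTop (𝓝 0) by simpa using hlim.pow 2)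
    have : cfc (fun t => √(√t)) b * u n - a = cfc (fun t => √(√t) * g n t - 1) b * a := by
      rw [cfc_sub (fun t => √(√t) * g n t) (fun _ => 1) b (hφ.mul (hg n)).continuousOn,
        cfc_mul _ _ b hφ.continuousOn (hg n).continuousOn, cfc_const_one ℝ b, sub_mul, one_mul,
        mul_assoc]
    rw [this]
    refine norm_cfc_mul_le_of_mul_star_le (f := fun t => √(√t) * g n t - 1) hab
      ((hφ.mul (hg n)).sub continuous_const) (sq_nonneg _) fun t ht _ => ?_
    rcases lt_or_ge (e n) (√(√t)) with h | h
    · rw [hgeq n t h, mul_inv_cancel₀ ((he0 n).trans h).ne']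
      simp [pow_nonneg (he0 n).le]
    · have h1 := hgs n t
      have h3 : (√(√t) * g n t - 1) ^ 2 ≤ 1 := by
        rw [sq_le_one_iff_abs_le_one, abs_le]; constructor <;> linarith
      calc t * (√(√t) * g n t - 1) ^ 2 = √(√t) ^ 4 * (√(√t) * g n t - 1) ^ 2 := by
            rw [← hroot t ht]
        _ ≤ e n ^ 4 * 1 := by gcongr
        _ = (e n ^ 2) ^ 2 := by ring
  · refine le_of_tendsto hv.norm (Eventually.of_forall fun n => ?_)
    refine norm_cfc_mul_le_of_mul_star_le hab (hg n) (Real.sqrt_nonneg _) fun t ht htb => ?_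
    have h1 := hgs n t
    calc t * g n t ^ 2 = √(√t) ^ 2 * (√(√t) * g n t) ^ 2 := by
          linear_combination g n t ^ 2 * hroot t ht
      _ ≤ √(√‖b‖) ^ 2 * 1 ^ 2 := by
          gcongr
          exact h1.2
      _ = √(√‖b‖) ^ 2 := by ring
  · intro J hJ ha
    exact hJ.mem_of_tendsto hv (Eventually.of_forall fun n => J.mul_mem_left _ ha)

theorem star_mem_of_isClosed {J : Ideal A} [J.IsTwoSided] (hJ : IsClosed (J : Set A)) {a : A}
    (ha : a ∈ J) : star a ∈ J := by
  obtain ⟨u, hu, -, -⟩ := exists_eq_cfc_sqrt_sqrt_mul (le_refl (a * star a))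
  have hsa : IsSelfAdjoint (cfc (fun t => √(√t)) (a * star a)) := cfc_predicate _ _
  rw [hu, star_mul, hsa.star_eq]
  exact J.mul_mem_left _ (cfc_sqrt_sqrt_mem_of_isClosed hJ (.mul_star_self a)
    (J.mul_mem_right _ ha))

theorem mem_of_forall_mul_mul_mem {J : Ideal A} [J.IsTwoSided] (hJ : IsClosed (J : Set A)) {x : A}
    (hx : ∀ y, x * y * x ∈ J) : x ∈ J := by
  obtain ⟨u, hu, -, -⟩ := exists_eq_cfc_sqrt_sqrt_mul (le_refl (x * star x))
  set b := x * star x with hb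
  have hb0 : 0 ≤ b := mul_star_self_nonneg x
  have hbsa : IsSelfAdjoint b := .of_nonneg hb0
  have hbb : b ^ 2 ∈ J := by
    have := J.mul_mem_right (star x) (hx (star x))
    rwa [mul_assoc, ← hb, ← sq] at this
  have hcomp : cfc (fun t => √(√t)) b = cfc (fun t => √(√(√t))) (b ^ 2) := by
    rw [← cfc_comp_pow (fun t => √(√(√t))) 2 b (by fun_prop)]
    refine cfc_congr fun t ht => ?_
    simp only [Real.sqrt_sq (spectrum_nonneg_of_nonneg hb0 ht)]
  rw [hu, hcomp]
  exact J.mul_mem_right _ (cfc_mem_of_isClosed hJ (hbsa.pow 2) hbb (by fun_prop) (by simp))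

end CStarIdeal

section FiniteQuotient

theorem Set.Infinite.exists_seq_pairwise_disjoint_ball {E : Type*} [MetricSpace E] {S : Set E}
    (hS : S.Infinite) : ∃ (p : ℕ → E) (ε : ℕ → ℝ), (∀ n, p n ∈ S) ∧ (∀ n, 0 < ε n) ∧
      Pairwise fun m n => Disjoint (Metric.ball (p m) (ε m)) (Metric.ball (p n) (ε n)) := by
  have := hS.to_subtype
  obtain ⟨U, hU, hUo, hUd⟩ := exists_seq_infinite_isOpen_pairwise_disjoint S
  choose p hp using fun n => (hU n).nonempty
  choose δ hδ0 hδ using fun n => Metric.isOpen_iff.mp (hUo n) (p n) (hp n)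
  refine ⟨fun n => p n, fun n => δ n / 2, fun n => (p n).2, fun n => half_pos (hδ0 n), ?_⟩
  intro m n hmn
  refine Set.disjoint_left.mpr fun x hxm hxn => ?_
  rw [Metric.mem_ball] at hxm hxn
  have hd : dist (p m) (p n) < δ m / 2 + δ n / 2 :=
    (dist_triangle_left (p m : E) (p n) x).trans_lt (add_lt_add hxm hxn)
  rcases le_total (δ m) (δ n) with h | h
  · exact Set.disjoint_left.mp (hUd hmn) (hp m) (hδ n (Metric.mem_ball.mpr (by linarith)))
  · refine Set.disjoint_left.mp (hUd hmn) (hδ m (Metric.mem_ball.mpr ?_)) (hp n)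
    rw [dist_comm]
    linarith

/-- The continuous function on `ℝ` equal to `1` for `dist x p ≤ (k - 1) ε / 4` and to `0` for
`dist x p ≥ k ε / 4`. -/
noncomputable def plateau (p ε k x : ℝ) : ℝ := max 0 (min 1 (k - 4 * dist x p / ε))

theorem continuous_plateau (p ε k : ℝ) : Continuous (plateau p ε k) := by
  unfold plateau
  fun_prop

theorem plateau_mul_plateau (p ε k x : ℝ) :
    plateau p ε (k + 1) x * plateau p ε k x = plateau p ε k x := by
  unfold plateau
  rcases le_total (k - 4 * dist x p / ε) 0 with h | h
  · rw [max_eq_left ((min_le_right _ _).trans h), mul_zero]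
  · rw [min_eq_left (show 1 ≤ k + 1 - 4 * dist x p / ε by linarith), max_eq_right zero_le_one,
      one_mul]

theorem plateau_self {k : ℝ} (hk : 1 ≤ k) (p ε : ℝ) : plateau p ε k p = 1 := by
  simp [plateau, hk]

theorem mem_ball_of_plateau_ne_zero {p ε k x : ℝ} (hε : 0 < ε) (hk : k ≤ 4)
    (h : plateau p ε k x ≠ 0) : x ∈ Metric.ball p ε := by
  by_contra hx
  rw [Metric.mem_ball, not_lt] at hx
  apply h
  have : 4 ≤ 4 * dist x p / ε := by rw [le_div_iff₀ hε]; linarith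
  exact max_eq_left ((min_le_right _ _).trans (by linarith))

variable {A X : Type*} [CStarAlgebra A] [NormedAddCommGroup X]
  [NormedSpace ℂ X] {l r : A →L[ℂ] X →L[ℂ] X} {D : A →ₗ[ℂ] X}

theorem exists_aeval_nodal_mem_continuityIdeal (h : IsUnitalJordanDerivation l r D) {a : A}
    (ha : IsSelfAdjoint a) :
    ∃ R : Finset ℝ, aeval a (Lagrange.nodal R (id : ℝ → ℝ)) ∈ h.continuityIdeal := by
  classical
  let I : Ideal C(spectrum ℝ a, ℝ) := h.continuityIdeal.comap (cfcHom (R := ℝ) ha)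
  have hI : IsClosed (I : Set C(spectrum ℝ a, ℝ)) :=
    h.isClosed_continuityIdeal.preimage (cfcHom_continuous ha)
  have hmem : ∀ f : ℝ → ℝ, ∀ hf : Continuous f,
      cfc f a ∈ h.continuityIdeal ↔ ∀ x ∈ (ContinuousMap.setOfIdeal I)ᶜ, f x = 0 := by
    intro f hf
    have h1 : (⟨_, hf.continuousOn.domRestrict⟩ : C(spectrum ℝ a, ℝ)) ∈ I ↔
        ∀ x ∈ (ContinuousMap.setOfIdeal I)ᶜ, f x = 0 := by
      conv_lhs => rw [← ContinuousMap.idealOfSet_ofIdeal_isClosed hI]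
      exact ContinuousMap.mem_idealOfSet
    rw [← h1, cfc_apply f a ha hf.continuousOn]
    rfl
  let S : Set ℝ := (↑) '' (ContinuousMap.setOfIdeal I)ᶜ
  have hS : S.Finite := by
    by_contra hS
    obtain ⟨p, ε, hp, hε, hd⟩ := Set.Infinite.exists_seq_pairwise_disjoint_ball hS
    have hc := fun k n => (continuous_plateau (p n) (ε n) k).continuousOn (s := spectrum ℝ a)
    have hmul : ∀ k n, cfc (plateau (p n) (ε n) (k + 1)) a * cfc (plateau (p n) (ε n) k) a =
        cfc (plateau (p n) (ε n) k) a := by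
      intro k n
      rw [← cfc_mul _ _ a (hc _ n) (hc _ n)]
      simp_rw [plateau_mul_plateau]
    have hcomm : ∀ k n, cfc (plateau (p n) (ε n) k) a * cfc (plateau (p n) (ε n) (k + 1)) a =
        cfc (plateau (p n) (ε n) k) a := fun k n => (cfc_commute_cfc _ _ a).eq.trans (hmul k n)
    obtain ⟨n, hn⟩ := h.exists_mem_continuityIdeal_of_orthogonal
      (fun n => cfc (plateau (p n) (ε n) (1 + 1 + 1)) a)
      (fun n => cfc (plateau (p n) (ε n) (1 + 1)) a) (fun n => cfc (plateau (p n) (ε n) 1) a)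
      (fun m n hmn => by
        rw [← cfc_mul _ _ a (hc _ m) (hc _ n)]
        convert cfc_zero ℝ a using 2
        ext x
        by_contra hx
        obtain ⟨h1, h2⟩ := mul_ne_zero_iff.mp hx
        exact Set.disjoint_left.mp (hd hmn) (mem_ball_of_plateau_ne_zero (hε m) (by norm_num) h1)
          (mem_ball_of_plateau_ne_zero (hε n) (by norm_num) h2))
      (fun n => hmul _ n) (fun n => hcomm _ n) (fun n => hmul _ n) (fun n => hcomm _ n)
    obtain ⟨x, hx, hxp⟩ := hp n
    have := (hmem _ (continuous_plateau (p n) (ε n) 1)).mp hn x hx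
    rw [hxp, plateau_self le_rfl] at this
    exact one_ne_zero this
  refine ⟨hS.toFinset, ?_⟩
  rw [← cfc_polynomial _ a ha, hmem _ (Polynomial.continuous _)]
  intro x hx
  exact Lagrange.eval_nodal_at_node (v := id) (hS.mem_toFinset.mpr ⟨x, hx, rfl⟩)

theorem exists_mem_continuityIdeal_of_orthogonal_idempotents
    (h : IsUnitalJordanDerivation l r D) (e : ℕ → A) (he : ∀ n, IsSelfAdjoint (e n))
    (hee : ∀ n, e n * e n - e n ∈ h.continuityIdeal)
    (horth : ∀ m n, m ≠ n → e m * e n ∈ h.continuityIdeal) : ∃ n, e n ∈ h.continuityIdeal := by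
  by_contra! hcon
  set J := h.continuityIdeal
  have hJ : IsClosed (J : Set A) := h.isClosed_continuityIdeal
  let μ : ℕ → ℝ := fun n => (1 / 2) ^ n / (1 + ∑ i ∈ Finset.range (n + 1), ‖e i‖)
  have hμ0 : ∀ n, 0 < μ n := fun n => by positivity
  have hμ : StrictAnti μ := by
    refine strictAnti_nat_of_succ_lt fun n => ?_
    simp only [μ]
    refine div_lt_div₀ (pow_lt_pow_right_of_lt_one₀ (by norm_num) (by norm_num) (Nat.lt_succ_self n))
      ?_ (by positivity) (by positivity)
    rw [Finset.sum_range_succ _ (n + 1)]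
    linarith [norm_nonneg (e (n + 1))]
  have hsum : Summable fun n => μ n • e n := by
    refine Summable.of_norm_bounded summable_geometric_two fun n => ?_
    have h1 : ‖e n‖ ≤ 1 + ∑ i ∈ Finset.range (n + 1), ‖e i‖ := by
      have := Finset.single_le_sum (f := fun i => ‖e i‖) (fun i _ => norm_nonneg _)
        (Finset.self_mem_range_succ n)
      linarith
    rw [norm_smul, Real.norm_of_nonneg (hμ0 n).le, div_mul_eq_mul_div, div_le_iff₀ (by positivity)]
    gcongr
  obtain ⟨s, hs⟩ := hsum
  have hssa : IsSelfAdjoint s := by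
    refine hs.star.unique ?_
    simpa [(he _).star_eq] using hs
  have hse : ∀ n, s * e n - μ n • e n ∈ J := by
    intro n
    have h1 := (hs.mul_right (e n)).sub (hasSum_ite_eq n (μ n • e n))
    refine hJ.mem_of_tendsto h1 (Eventually.of_forall fun F => J.sum_mem fun i _ => ?_)
    by_cases hi : i = n
    · subst hi
      rw [if_pos rfl, smul_mul_assoc, ← smul_sub]
      exact J.smul_of_tower_mem _ (hee i)
    · rw [if_neg hi, sub_zero, smul_mul_assoc]
      exact J.smul_of_tower_mem _ (horth i n hi)
  obtain ⟨R, hR⟩ := exists_aeval_nodal_mem_continuityIdeal h hssa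
  have hμR : ∀ n, μ n ∈ R := by
    intro n
    by_contra hn
    set g := Lagrange.nodal R (id : ℝ → ℝ) with hg
    have hgn : g.eval (μ n) ≠ 0 :=
      Lagrange.eval_nodal_not_at_node fun i hi heq => hn (by simpa [heq] using hi)
    obtain ⟨q, hq⟩ : Polynomial.X - C (μ n) ∣ g - C (g.eval (μ n)) := by
      rw [dvd_iff_isRoot]
      simp
    have h1 : (aeval s g - algebraMap ℝ A (g.eval (μ n))) * e n ∈ J := by
      have h2 : aeval s g - algebraMap ℝ A (g.eval (μ n)) =
          aeval s q * (s - algebraMap ℝ A (μ n)) := by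
        have := congrArg (aeval s) hq
        rwa [mul_comm, map_mul, map_sub, map_sub, aeval_C, aeval_C, aeval_X] at this
      rw [h2, mul_assoc, sub_mul, ← Algebra.smul_def]
      exact J.mul_mem_left _ (hse n)
    have h2 : g.eval (μ n) • e n ∈ J := by
      have := J.sub_mem (J.mul_mem_right (e n) hR) h1
      rwa [← sub_mul, sub_sub_cancel, ← Algebra.smul_def] at this
    apply hcon n
    simpa [smul_smul, hgn] using J.smul_of_tower_mem (g.eval (μ n))⁻¹ h2
  exact Set.infinite_range_of_injective hμ.injective
    (R.finite_toSet.subset (Set.range_subset_iff.mpr hμR))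

variable [PartialOrder A] [StarOrderedRing A]

theorem finite_quotient_continuityIdeal (h : IsUnitalJordanDerivation l r D) :
    Module.Finite ℂ (A ⧸ h.continuityIdeal) := by
  let π : A →ₐ[ℂ] A ⧸ h.continuityIdeal := Ideal.Quotient.mkₐ ℂ h.continuityIdeal
  have hπ : Function.Surjective π := Ideal.Quotient.mkₐ_surjective ℂ _
  have hπ0 : ∀ x, π x = 0 ↔ x ∈ h.continuityIdeal := fun x => Ideal.Quotient.eq_zero_iff_mem
  refine finite_of_one_mem_span_minimalIdempotents (fun x hx => ?_)
    (one_mem_span_minimalIdempotents hπ (fun a ha => ?_) fun e he hee horth => ?_)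
  · obtain ⟨x, rfl⟩ := hπ x
    rw [hπ0]
    refine mem_of_forall_mul_mul_mem h.isClosed_continuityIdeal fun y => ?_
    rw [← hπ0, map_mul, map_mul, hx]
  · obtain ⟨R, hR⟩ := exists_aeval_nodal_mem_continuityIdeal h ha
    refine ⟨R, ?_⟩
    rw [← hπ0] at hR
    rw [← hR]
    exact aeval_algHom_apply (π.restrictScalars ℝ) _ _
  · simp only [hπ0]
    refine exists_mem_continuityIdeal_of_orthogonal_idempotents h e he (fun n => ?_)
      fun m n hmn => ?_
    · rw [← hπ0, map_sub, map_mul, hee, sub_self]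
    · rw [← hπ0, map_mul, horth m n hmn]

end FiniteQuotient

section Continuity

variable {A X : Type*} [CStarAlgebra A] [PartialOrder A] [StarOrderedRing A]
  [NormedAddCommGroup X] [NormedSpace ℂ X] {l r : A →L[ℂ] X →L[ℂ] X} {D : A →ₗ[ℂ] X}

theorem exists_norm_map_mul_star_le (h : IsUnitalJordanDerivation l r D) :
    ∃ C : ℝ, 0 ≤ C ∧ ∀ a ∈ h.continuityIdeal, ‖D (a * star a)‖ ≤ C * ‖a‖ ^ 2 := by
  by_contra! hcon
  set J := h.continuityIdeal
  have hJ : IsClosed (J : Set A) := h.isClosed_continuityIdeal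
  have ht : ∀ n : ℕ, ∃ t ∈ J, ‖t‖ ≤ (1 / 2) ^ n ∧ (n : ℝ) < ‖D (t * star t)‖ := by
    intro n
    obtain ⟨a, haJ, ha⟩ := hcon (n * 4 ^ n) (by positivity)
    have ha0 : 0 < ‖a‖ := by
      rw [norm_pos_iff]
      rintro rfl
      simp at ha
    set c : ℝ := (1 / 2) ^ n / ‖a‖ with hc
    refine ⟨c • a, J.smul_of_tower_mem _ haJ, ?_, ?_⟩
    · rw [norm_smul, Real.norm_of_nonneg (by positivity), hc, div_mul_cancel₀ _ ha0.ne']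
    · rw [star_smul, smul_mul_smul_comm, star_trivial, D.map_smul_of_tower, norm_smul,
        Real.norm_of_nonneg (by positivity)]
      have hcc : c * c * (n * 4 ^ n * ‖a‖ ^ 2) = n := by
        have : (4 : ℝ) ^ n = 2 ^ n * 2 ^ n := by rw [← mul_pow]; norm_num
        rw [hc, this, div_pow, one_pow]
        field_simp
      calc (n : ℝ) = c * c * (n * 4 ^ n * ‖a‖ ^ 2) := hcc.symm
        _ < c * c * ‖D (a * star a)‖ := by gcongr
  choose t htJ htn htD using ht
  have hsum : Summable fun n => t n * star (t n) := by
    refine Summable.of_norm_bounded summable_geometric_two fun n => ?_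
    rw [CStarRing.norm_self_mul_star]
    calc ‖t n‖ * ‖t n‖ ≤ (1 / 2) ^ n * 1 := by
          gcongr
          · exact htn n
          · exact (htn n).trans (pow_le_one₀ (by norm_num) (by norm_num))
      _ = (1 / 2) ^ n := mul_one _
  obtain ⟨b, hb⟩ := hsum
  have hle : ∀ n, t n * star (t n) ≤ b := fun n =>
    le_hasSum hb n fun i _ => mul_star_self_nonneg _
  have hb0 : 0 ≤ b := (mul_star_self_nonneg _).trans (hle 0)
  have hbJ : b ∈ J := hJ.mem_of_tendsto hb (Eventually.of_forall fun F =>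
    J.sum_mem fun i _ => J.mul_mem_right _ (htJ i))
  set y := cfc (fun t => √(√t)) b with hy
  have hyJ : y ∈ J := cfc_sqrt_sqrt_mem_of_isClosed hJ (.of_nonneg hb0) hbJ
  have hysa : star y = y := (cfc_predicate _ _ : IsSelfAdjoint y).star_eq
  choose u hu hun _ using fun n => exists_eq_cfc_sqrt_sqrt_mul (hle n)
  let T : A →L[ℂ] X := ⟨D ∘ₗ LinearMap.mulRight ℂ y ∘ₗ LinearMap.mulLeft ℂ y,
    h.continuous_map_mul_mul_self hyJ.1⟩
  obtain ⟨n, hn⟩ := exists_nat_gt (‖T‖ * (√(√‖b‖) * √(√‖b‖)))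
  refine (htD n).not_ge (le_trans ?_ hn.le)
  have hTn : D (t n * star (t n)) = T (u n * star (u n)) := by
    change _ = D (y * (u n * star (u n)) * y)
    conv_lhs => rw [hu n, star_mul, hysa]
    simp only [mul_assoc, ← hy]
  calc ‖D (t n * star (t n))‖ ≤ ‖T‖ * ‖u n * star (u n)‖ := hTn ▸ T.le_opNorm _
    _ ≤ ‖T‖ * (√(√‖b‖) * √(√‖b‖)) := by
      rw [CStarRing.norm_self_mul_star]
      gcongr <;> exact hun n

theorem exists_norm_map_le_of_mem_continuityIdeal (h : IsUnitalJordanDerivation l r D) :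
    ∃ C : ℝ, ∀ a ∈ h.continuityIdeal, ‖D a‖ ≤ C * ‖a‖ := by
  obtain ⟨C, hC0, hC⟩ := exists_norm_map_mul_star_le h
  refine ⟨4 * C, fun a ha => ?_⟩
  set J := h.continuityIdeal
  have hJ : IsClosed (J : Set A) := h.isClosed_continuityIdeal
  obtain ⟨u, hu, hun, huJ⟩ := exists_eq_cfc_sqrt_sqrt_mul (le_refl (a * star a))
  have hsa : IsSelfAdjoint (a * star a) := .mul_star_self a
  set y := cfc (fun t => √(√t)) (a * star a) with hy
  have hyJ : y ∈ J :=
    cfc_sqrt_sqrt_mem_of_isClosed hJ hsa (J.mul_mem_right _ ha)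
  have hnorm : √(√‖a * star a‖) = √‖a‖ := by
    rw [CStarRing.norm_self_mul_star, Real.sqrt_mul_self (norm_nonneg _)]
  have hyn : ‖y‖ ≤ √‖a‖ := by
    rw [← hnorm]
    refine norm_cfc_le (Real.sqrt_nonneg _) fun t ht => ?_
    rw [Real.norm_of_nonneg (Real.sqrt_nonneg _)]
    have := norm_apply_le_norm_cfc (id : ℝ → ℝ) (a * star a) ht continuousOn_id hsa
    rw [cfc_id ℝ (a * star a) hsa] at this
    gcongr
    exact (le_abs_self t).trans this
  rw [hnorm] at hun
  set v := star u with hv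
  have hvJ : v ∈ J := star_mem_of_isClosed hJ (huJ J hJ ha)
  have hvn : ‖v‖ ≤ √‖a‖ := by rwa [hv, norm_star]
  have hbound : ∀ c : ℂ, ‖c‖ = 1 → ‖D ((y + c • v) * star (y + c • v))‖ ≤ C * (4 * ‖a‖) := by
    intro c hc
    refine (hC _ (J.add_mem hyJ (J.smul_of_tower_mem c hvJ))).trans ?_
    have h1 : ‖y + c • v‖ ≤ 2 * √‖a‖ := by
      refine (norm_add_le _ _).trans ?_
      rw [norm_smul, hc, one_mul]
      linarith
    calc C * ‖y + c • v‖ ^ 2 ≤ C * (2 * √‖a‖) ^ 2 := by gcongr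
      _ = C * (4 * ‖a‖) := by rw [mul_pow, Real.sq_sqrt (norm_nonneg a)]; norm_num
  have hpol : (4 : ℂ) • a =
      (1 : ℂ) • ((y + (1 : ℂ) • v) * star (y + (1 : ℂ) • v)) +
      Complex.I • ((y + Complex.I • v) * star (y + Complex.I • v)) +
      (-1 : ℂ) • ((y + (-1 : ℂ) • v) * star (y + (-1 : ℂ) • v)) +
      (-Complex.I) • ((y + (-Complex.I) • v) * star (y + (-Complex.I) • v)) := by
    have hI := Complex.I_mul_I
    have hva : y * star v = a := by rw [hv, star_star, ← hu]
    simp only [star_add, star_smul, mul_add, add_mul, smul_mul_assoc, mul_smul_comm, smul_add,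
      smul_smul, hva]
    simp [Complex.conj_I, hI]
    module
  have hD : (4 : ℝ) * ‖D a‖ ≤ 4 * (C * (4 * ‖a‖)) := by
    have h4 : ‖D ((4 : ℂ) • a)‖ = 4 * ‖D a‖ := by rw [map_smul, norm_smul]; simp
    rw [← h4, hpol, map_add, map_add, map_add, map_smul, map_smul, map_smul, map_smul]
    refine (norm_add₄_le).trans ?_
    simp only [norm_smul, norm_one, norm_neg, Complex.norm_I, one_mul]
    linarith [hbound 1 (by simp), hbound Complex.I (by simp), hbound (-1) (by simp),
      hbound (-Complex.I) (by simp)]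
  linarith

theorem continuous_of_isUnitalJordanDerivation (h : IsUnitalJordanDerivation l r D) :
    Continuous D := by
  have := finite_quotient_continuityIdeal h
  let J : Submodule ℂ A := h.continuityIdeal.restrictScalars ℂ
  have hJ : IsClosed (J : Set A) := h.isClosed_continuityIdeal
  have : CompleteSpace J := hJ.completeSpace_coe
  let π : A →ₗ[ℂ] A ⧸ h.continuityIdeal := (Ideal.Quotient.mkₐ ℂ h.continuityIdeal).toLinearMap
  obtain ⟨n, f, hf⟩ := Module.Finite.exists_fin' ℂ (A ⧸ h.continuityIdeal)
  obtain ⟨g, hg⟩ := Module.projective_lifting_property π f (Ideal.Quotient.mkₐ_surjective ℂ _)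
  let Φ : (J × (Fin n → ℂ)) →L[ℂ] A := J.subtypeL.coprod (LinearMap.toContinuousLinearMap g)
  have hΦ : Function.Surjective Φ := by
    intro x
    obtain ⟨c, hc⟩ := hf (π x)
    have hx : x - g c ∈ J := by
      refine Ideal.Quotient.eq_zero_iff_mem.mp ?_
      change π (x - g c) = 0
      rw [map_sub, ← LinearMap.comp_apply, hg, hc, sub_self]
    exact ⟨(⟨x - g c, hx⟩, c), by simp [Φ]⟩
  rw [(Φ.isQuotientMap hΦ).continuous_iff]
  obtain ⟨C, hC⟩ := exists_norm_map_le_of_mem_continuityIdeal h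
  have h1 : Continuous (D ∘ₗ J.subtype) :=
    AddMonoidHomClass.continuous_of_bound (D ∘ₗ J.subtype) C fun a => hC a a.2
  have h2 : Continuous (D ∘ₗ g) := (D ∘ₗ g).continuous_of_finiteDimensional
  have hsum : D ∘ Φ = fun x => (D ∘ₗ J.subtype) x.1 + (D ∘ₗ g) x.2 := by
    ext x
    simp [Φ]
  rw [hsum]
  exact (h1.comp continuous_fst).add (h2.comp continuous_snd)

end Continuity

section Unitization

variable {A X : Type*} [NonUnitalCStarAlgebra A] [NormedAddCommGroup X] [NormedSpace ℂ X]

/-- The extension of an action of `A` on `X` to an action of the unitization in which `1` acts as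
the identity. -/
noncomputable def unitizationAction (l : A →L[ℂ] X →L[ℂ] X) :
    Unitization ℂ A →L[ℂ] X →L[ℂ] X :=
  ContinuousLinearMap.smulRight
      (⟨(Unitization.fstHom ℂ A).toLinearMap, Unitization.continuous_fst⟩ :
        Unitization ℂ A →L[ℂ] ℂ) (ContinuousLinearMap.id ℂ X) +
    l.comp ⟨Unitization.sndHom ℂ ℂ A, Unitization.continuous_snd⟩

@[simp]
theorem unitizationAction_apply (l : A →L[ℂ] X →L[ℂ] X) (a : Unitization ℂ A) (x : X) :
    unitizationAction l a x = a.fst • x + l a.snd x := rfl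

theorem continuous_of_jordan_derivation {l r : A →L[ℂ] X →L[ℂ] X}
    (hl : ∀ a b x, l (a * b) x = l a (l b x)) (hr : ∀ a b x, r (a * b) x = r b (r a x))
    (hlr : ∀ a b x, r b (l a x) = l a (r b x)) {D : A →ₗ[ℂ] X}
    (hD : ∀ a, D (a * a) = l a (D a) + r a (D a)) : Continuous D := by
  let _ := CStarAlgebra.spectralOrder (Unitization ℂ A)
  have := CStarAlgebra.spectralOrderedRing (Unitization ℂ A)
  have h : IsUnitalJordanDerivation (unitizationAction l) (unitizationAction r)
      (D ∘ₗ Unitization.sndHom ℂ ℂ A) :=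
    { left_one := fun x => by simp
      right_one := fun x => by simp
      left_mul := fun a b x => by
        simp only [unitizationAction_apply, Unitization.fst_mul, Unitization.snd_mul, map_add,
          map_smul, add_apply, smul_apply, hl]
        module
      right_mul := fun a b x => by
        simp only [unitizationAction_apply, Unitization.fst_mul, Unitization.snd_mul, map_add,
          map_smul, add_apply, smul_apply, hr]
        module
      comm := fun a b x => by
        simp only [unitizationAction_apply, map_add, map_smul, hlr]
        module
      map_sq := fun a => by
        simp only [LinearMap.comp_apply, Unitization.sndHom_apply, unitizationAction_apply,
          Unitization.snd_mul, map_add, map_smul, hD]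
        module }
  exact (continuous_of_isUnitalJordanDerivation h).comp Unitization.continuous_inr

end Unitization

/-- Every Jordan derivation from a C*-algebra `A` into a Banach `A`-bimodule `X`
(not assumed bounded) is automatically continuous.  The bimodule actions are given by
the bounded bilinear maps `l` and `r`. -/
theorem jordan_derivation_automatic_continuity (A X : Type*)
    [NonUnitalNormedRing A] [StarRing A] [CStarRing A] [CompleteSpace A]
    [NormedSpace ℂ A] [IsScalarTower ℂ A A] [SMulCommClass ℂ A A] [StarModule ℂ A]
    [NormedAddCommGroup X] [NormedSpace ℂ X] [CompleteSpace X]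
    (l : A →ₗ[ℂ] X →ₗ[ℂ] X) (r : X →ₗ[ℂ] A →ₗ[ℂ] X)
    (hlbdd : ∃ C : ℝ, ∀ (a : A) (x : X), ‖l a x‖ ≤ C * ‖a‖ * ‖x‖)
    (hrbdd : ∃ C : ℝ, ∀ (x : X) (a : A), ‖r x a‖ ≤ C * ‖x‖ * ‖a‖)
    (hmod₁ : ∀ (a b : A) (x : X), l a (l b x) = l (a * b) x)
    (hmod₂ : ∀ (a b : A) (x : X), l a (r x b) = r (l a x) b)
    (hmod₃ : ∀ (a b : A) (x : X), r (r x a) b = r x (a * b))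
    (D : A →ₗ[ℂ] X)
    (hD : ∀ a : A, D (a * a) = l a (D a) + r (D a) a) :
    Continuous D := by
  let _ : NonUnitalCStarAlgebra A := { }
  obtain ⟨Cl, hCl⟩ := hlbdd
  obtain ⟨Cr, hCr⟩ := hrbdd
  exact continuous_of_jordan_derivation (l := l.mkContinuous₂ Cl hCl)
    (r := r.flip.mkContinuous₂ Cr fun a x => (hCr x a).trans_eq (mul_right_comm _ _ _))
    (fun a b x => (hmod₁ a b x).symm) (fun a b x => (hmod₃ a b x).symm)
    (fun a b x => (hmod₂ a b x).symm) hD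
end

section
/- (Miers) Let M be a von Neumann algebra and let L : M → M be a Lie derivation, i.e., a linear map satisfying L([x, y]) = [L(x), y] + [x, L(y)] for all x, y ∈ M, where [x, y] = xy − yx. Then L = D + λ, where D : M → M is an associative derivation (D(xy) = D(x)y + xD(y)) and λ : M → Z(M) is a linear map into the center of M which vanishes on all commutators [x, y]. -/
/-- A pair of orthogonal idempotents `e true`, `e false` whose sum `f` is central, such that both
are faithful on `f`, and such that the center of each corner comes from the center of the ring. -/
structure PeircePair {R : Type*} [Ring R] (f : R) (e : Bool → R) : Prop where
  central : ∀ x, f * x = x * f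
  idem : ∀ i, e i * e i = e i
  orth : ∀ i, e i * e (!i) = 0
  sum : ∀ i, e i + e (!i) = f
  faithful : ∀ i x, (∀ m, x * m * e i = 0) → x * f = 0
  corner_center : ∀ i c, e i * c = c → c * e i = c →
    (∀ m, c * (e i * m * e i) = (e i * m * e i) * c) → ∃ z, (∀ x, z * x = x * z) ∧ z * e i = c
  reduced_center : ∀ c : R, (∀ x, c * x = x * c) → c * c = 0 → c = 0

theorem eq_zero_of_eq_neg {V : Type*} [AddCommGroup V] [Module ℂ V] {x : V} (h : x = -x) :
    x = 0 := by
  have h2 : (2 : ℂ) • x = 0 := by rw [two_smul]; nth_rewrite 2 [h]; simp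
  simpa using h2

namespace PeircePair

variable {R : Type*} [Ring R] {f : R} {e : Bool → R}

theorem orth' (h : PeircePair f e) (i : Bool) : e (!i) * e i = 0 := by
  simpa using h.orth (!i)

theorem mul_f (h : PeircePair f e) (i : Bool) : e i * f = e i := by
  rw [← h.sum i, mul_add, h.idem, h.orth, add_zero]

theorem f_mul (h : PeircePair f e) (i : Bool) : f * e i = e i := by
  rw [h.central, h.mul_f]

theorem f_idem (h : PeircePair f e) : f * f = f := by
  conv_lhs => enter [1]; rw [← h.sum true]
  rw [add_mul, h.mul_f, h.mul_f, h.sum]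

/-- Peirce decomposition. -/
theorem decomp (h : PeircePair f e) (i : Bool) (x : R) :
    f * x = e i * x * e i + e i * x * e (!i) + e (!i) * x * e i + e (!i) * x * e (!i) := by
  have : f * x = f * x * f := by rw [mul_assoc, ← h.central x, ← mul_assoc, h.f_idem]
  rw [this, ← h.sum i]; noncomm_ring

/-- A central element supported on `f` is determined by either corner. -/
theorem central_ext (h : PeircePair f e) (i : Bool) {z : R} (hz : ∀ x, z * x = x * z)
    (hf : z * f = z) (hi : z * e i = 0) : z = 0 := by
  rw [← hf]
  refine h.faithful i z fun m => ?_
  rw [hz m, mul_assoc, hi, mul_zero]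

/-- The corners of a central element on the two sides. -/
theorem exists_corner_center (h : PeircePair f e) (i : Bool) (c : R)
    (hc : ∀ m, e i * c * e i * (e i * m * e i) = (e i * m * e i) * (e i * c * e i)) :
    ∃ z, (∀ x, z * x = x * z) ∧ z * f = z ∧ z * e i = e i * c * e i := by
  obtain ⟨z, hz, hze⟩ := h.corner_center i (e i * c * e i) (by simp [← mul_assoc, h.idem])
    (by simp [mul_assoc, h.idem]) hc
  refine ⟨z * f, fun x => ?_, by rw [mul_assoc, h.f_idem], by rw [mul_assoc, h.f_mul, hze]⟩
  rw [mul_assoc, h.central, ← mul_assoc, hz, mul_assoc]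

section LieDerivation

variable [Algebra ℂ R] {L : R →ₗ[ℂ] R}

theorem map_offdiag (h : PeircePair f e)
    (hL : ∀ x y, L (x * y - y * x) = (L x * y - y * L x) + (x * L y - L y * x))
    (hfL : ∀ x, f * L x = L x) (hLe : ∀ i x, L (e i) * x = x * L (e i)) (i : Bool) (x : R) :
    L (e i * x * e (!i)) = e i * L (e i * x * e (!i)) * e (!i) := by
  have h1 := hL (e i) (e i * x * e (!i))
  rw [hLe, sub_self, zero_add, mul_assoc _ _ (e i), h.orth', mul_zero, sub_zero, ← mul_assoc,
    ← mul_assoc, h.idem] at h1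
  set y := L (e i * x * e (!i)) with hy
  have hii : e i * y * e i = 0 := by
    have := congr(e i * $h1 * e i)
    rw [mul_sub, ← mul_assoc, h.idem, sub_mul, mul_assoc (e i) (y * e i), mul_assoc y, h.idem,
      ← mul_assoc, sub_self] at this
    exact this
  have hjj : e (!i) * y * e (!i) = 0 := by
    rw [h1, mul_sub, sub_mul]
    simp [← mul_assoc, h.orth']
    simp [mul_assoc, h.orth]
  have hji : e (!i) * y * e i = 0 := by
    have h2 : e (!i) * y * e i = -(e (!i) * y * e i) := by
      conv_lhs => rw [h1, mul_sub, sub_mul]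
      simp [← mul_assoc, h.orth']
      simp [mul_assoc, h.idem]
    exact eq_zero_of_eq_neg h2
  have := h.decomp i y
  rw [hy, hfL, ← hy, hii, hjj, hji] at this
  simpa using this

theorem map_diag (h : PeircePair f e)
    (hL : ∀ x y, L (x * y - y * x) = (L x * y - y * L x) + (x * L y - L y * x))
    (hLe : ∀ i x, L (e i) * x = x * L (e i)) (i : Bool) (x : R) :
    e i * L (e i * x * e i) = L (e i * x * e i) * e i := by
  have h1 := hL (e i) (e i * x * e i)
  rw [hLe, sub_self, zero_add, mul_assoc _ (e i) (e i), h.idem, ← mul_assoc,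
    ← mul_assoc, h.idem, sub_self, map_zero] at h1
  exact (sub_eq_zero.mp h1.symm)

/-- The component of `L (e i * x * e i)` in the opposite corner comes from the center. -/
theorem exists_central (h : PeircePair f e)
    (hL : ∀ x y, L (x * y - y * x) = (L x * y - y * L x) + (x * L y - L y * x)) (i : Bool) (x : R) :
    ∃ z, (∀ x, z * x = x * z) ∧ z * f = z ∧
      z * e (!i) = e (!i) * L (e i * x * e i) * e (!i) := by
  refine h.exists_corner_center (!i) _ fun m => ?_
  have h1 := hL (e i * x * e i) (e (!i) * m * e (!i))
  have e1 : e i * x * e i * (e (!i) * m * e (!i)) = 0 := by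
    rw [mul_assoc _ (e i), ← mul_assoc (e i), ← mul_assoc (e i), h.orth]; simp
  have e2 : e (!i) * m * e (!i) * (e i * x * e i) = 0 := by
    rw [mul_assoc _ (e (!i)), ← mul_assoc (e (!i)), ← mul_assoc (e (!i)), h.orth']; simp
  rw [e1, e2, sub_self, map_zero] at h1
  have h2 := congr(e (!i) * $h1 * e (!i))
  generalize L (e i * x * e i) = y at *
  generalize L (e (!i) * m * e (!i)) = w at *
  have e3 : e (!i) * (e i * x * e i * w - w * (e i * x * e i)) * e (!i) = 0 := by
    rw [mul_sub, sub_mul]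
    simp [← mul_assoc, h.orth']
    simp [mul_assoc, h.orth]
  rw [mul_add, add_mul, e3, add_zero, mul_zero, zero_mul, mul_sub, sub_mul] at h2
  have h3 := (sub_eq_zero.mp h2.symm)
  have i1 : e (!i) * y * e (!i) * (e (!i) * m * e (!i)) = e (!i) * (y * (e (!i) * m * e (!i))) * e (!i) := by
    simp only [mul_assoc, h.idem]; rw [← mul_assoc (e (!i)) (e (!i)), h.idem]
  have i2 : e (!i) * m * e (!i) * (e (!i) * y * e (!i)) = e (!i) * (e (!i) * m * e (!i) * y) * e (!i) := by
    simp only [← mul_assoc, h.idem]; simp only [mul_assoc]; rw [← mul_assoc (e (!i)) (e (!i)), h.idem]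
  rw [i1, i2, h3]


theorem exists_center_map (h : PeircePair f e)
    (hL : ∀ x y, L (x * y - y * x) = (L x * y - y * L x) + (x * L y - L y * x)) (i : Bool) :
    ∃ lam : R →ₗ[ℂ] R, ∀ x, (∀ y, lam x * y = y * lam x) ∧ lam x * f = lam x ∧
      lam x * e (!i) = e (!i) * L (e i * x * e i) * e (!i) := by
  choose lam hc hf he using h.exists_central hL i
  refine ⟨⟨⟨lam, fun x y => ?_⟩, fun a x => ?_⟩, fun x => ⟨hc x, hf x, he x⟩⟩
  · refine sub_eq_zero.mp (h.central_ext (!i) (fun w => ?_) ?_ ?_)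
    · simp only [sub_mul, add_mul, mul_sub, mul_add, hc _ w]
    · simp only [sub_mul, add_mul, hf]
    · simp only [sub_mul, add_mul, he, mul_add, map_add, sub_self]
  · refine sub_eq_zero.mp (h.central_ext (!i) (fun w => ?_) ?_ ?_)
    · simp only [sub_mul, mul_sub, hc _ w, RingHom.id_apply, smul_mul_assoc, mul_smul_comm]
    · simp only [sub_mul, hf, RingHom.id_apply, smul_mul_assoc]
    · simp only [sub_mul, he, RingHom.id_apply, smul_mul_assoc, mul_smul_comm, map_smul, sub_self]

/-- Splitting off a central map makes the remainder homogeneous for the Peirce grading. -/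
theorem exists_homogeneous (h : PeircePair f e)
    (hL : ∀ x y, L (x * y - y * x) = (L x * y - y * L x) + (x * L y - L y * x))
    (hLf : ∀ x, L (f * x) = L x) (hfL : ∀ x, f * L x = L x)
    (hLe : ∀ i x, L (e i) * x = x * L (e i)) :
    ∃ D lam : R →ₗ[ℂ] R, L = D + lam ∧ (∀ x y, lam x * y = y * lam x) ∧
      (∀ x, D (f * x) = D x) ∧ (∀ x, f * D x = D x) ∧
      (∀ i x, lam (e i * x * e (!i)) = 0) ∧
      (∀ i j x, D (e i * x * e j) = e i * D (e i * x * e j) * e j) := by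
  choose mu hc hf he using h.exists_center_map hL
  have hmf : ∀ i x, mu i (f * x) = mu i x := fun i x => by
    refine sub_eq_zero.mp (h.central_ext (!i) (fun w => ?_) ?_ ?_)
    · simp only [sub_mul, mul_sub, hc _ _ w]
    · simp only [sub_mul, hf]
    · simp only [sub_mul, he, ← mul_assoc, h.mul_f, sub_self]
  have hoff : ∀ i j x, mu j (e i * x * e (!i)) = 0 := fun i j x => by
    refine h.central_ext (!j) (hc _ _) (hf _ _) ?_
    have : e j * (e i * x * e (!i)) * e j = 0 := by
      obtain rfl | rfl : i = j ∨ i = !j := by cases i <;> cases j <;> simp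
      · rw [mul_assoc, mul_assoc _ (e (!i)), h.orth', mul_zero, mul_zero]
      · rw [← mul_assoc, ← mul_assoc, h.orth]; simp
    rw [he, this]; simp
  have hdiag : ∀ i x, mu (!i) (e i * x * e i) = 0 := fun i x => by
    refine h.central_ext i (hc _ _) (hf _ _) ?_
    have := he (!i) (e i * x * e i)
    rw [Bool.not_not] at this
    rw [this, ← mul_assoc, ← mul_assoc, h.orth']; simp
  have hsum : ∀ i x, mu true x + mu false x = mu i x + mu (!i) x := fun i x => by
    cases i
    · exact add_comm _ _
    · rfl
  have hlc : ∀ x y, (mu true + mu false) x * y = y * (mu true + mu false) x := fun x y => by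
    simp only [LinearMap.add_apply, add_mul, mul_add, hc _ _ y]
  have hlo : ∀ i x, (mu true + mu false) (e i * x * e (!i)) = 0 := fun i x => by
    simp only [LinearMap.add_apply, hoff, add_zero]
  refine ⟨L - (mu true + mu false), mu true + mu false, by simp, hlc, fun x => ?_, fun x => ?_,
    hlo, fun i j x => ?_⟩
  · simp only [LinearMap.sub_apply, LinearMap.add_apply, hmf, hLf]
  · rw [LinearMap.sub_apply, mul_sub, hfL, ← hlc, LinearMap.add_apply, add_mul, hf, hf]
  · obtain rfl | rfl : j = i ∨ j = !i := by cases i <;> cases j <;> simp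
    · have hD : (L - (mu true + mu false)) (e j * x * e j)
          = L (e j * x * e j) - mu j (e j * x * e j) := by
        rw [LinearMap.sub_apply, LinearMap.add_apply, hsum j, hdiag, add_zero]
      have hd := h.map_diag hL hLe j x
      have hE := he j (e j * x * e j)
      rw [show e j * (e j * x * e j) * e j = e j * x * e j by
        simp only [mul_assoc, h.idem]; simp only [← mul_assoc, h.idem]] at hE
      have hcc := hc j (e j * x * e j)
      have hff := hf j (e j * x * e j)
      rw [hD]
      have hfL' := hfL (e j * x * e j)
      generalize L (e j * x * e j) = y at *
      generalize mu j (e j * x * e j) = z at *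
      have dec := h.decomp j (y - z)
      have h1 : f * (y - z) = y - z := by rw [mul_sub, hfL', ← hcc, hff]
      have h2 : e j * (y - z) * e (!j) = 0 := by
        rw [mul_sub, hd, ← hcc, sub_mul, mul_assoc, mul_assoc, h.orth]; simp
      have h3 : e (!j) * (y - z) * e j = 0 := by
        rw [mul_assoc, sub_mul, ← hd, hcc, mul_sub, ← mul_assoc, ← mul_assoc, h.orth']; simp
      have h4 : e (!j) * (y - z) * e (!j) = 0 := by
        rw [mul_sub, sub_mul, ← hE, ← hcc, mul_assoc z, h.idem, sub_self]
      rw [h1, h2, h3, h4] at dec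
      simpa using dec
    · have hD : (L - (mu true + mu false)) (e i * x * e (!i)) = L (e i * x * e (!i)) := by
        rw [LinearMap.sub_apply, hlo, sub_zero]
      rw [hD]
      exact h.map_offdiag hL hfL hLe i x

/-- A Peirce-homogeneous Lie derivation modulo the center is a derivation. -/
theorem derivation_of_homogeneous (h : PeircePair f e) {D lam : R →ₗ[ℂ] R}
    (hL : ∀ x y, D (x * y - y * x) + lam (x * y - y * x)
      = (D x * y - y * D x) + (x * D y - D y * x))
    (hc : ∀ x y, lam x * y = y * lam x)
    (hDf : ∀ x, D (f * x) = D x) (hfD : ∀ x, f * D x = D x)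
    (hlo : ∀ i x, lam (e i * x * e (!i)) = 0)
    (hD : ∀ i j x, D (e i * x * e j) = e i * D (e i * x * e j) * e j) (x y : R) :
    D (x * y) = D x * y + x * D y := by
  -- membership in the Peirce component `(i, j)`
  let P : Bool → Bool → R → Prop := fun i j x => e i * x = x ∧ x * e j = x
  have P_mk : ∀ i j x, P i j (e i * x * e j) := fun i j x =>
    ⟨by rw [← mul_assoc, ← mul_assoc, h.idem], by rw [mul_assoc, h.idem]⟩
  have P_eq : ∀ {i j x}, P i j x → e i * x * e j = x := fun hx => by rw [hx.1, hx.2]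
  have P_D : ∀ {i j x}, P i j x → P i j (D x) := fun {i j x} hx => by
    have := hD i j x
    rw [P_eq hx] at this
    rw [this]; exact P_mk _ _ _
  have P_mul : ∀ {i j k l x y}, P i j x → P k l y → P i l (x * y) := fun hx hy =>
    ⟨by rw [← mul_assoc, hx.1], by rw [mul_assoc, hy.2]⟩
  have P_zero : ∀ {i j l x y}, P i j x → P (!j) l y → x * y = 0 := fun {i j l x y} hx hy => by
    rw [← hx.2, ← hy.1, mul_assoc, ← mul_assoc (e j), h.orth, zero_mul, mul_zero]
  have P_zero' : ∀ {i j l x y}, P i (!j) x → P j l y → x * y = 0 := fun {i j l x y} hx hy => by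
    rw [← hx.2, ← hy.1, mul_assoc, ← mul_assoc (e (!j)), h.orth', zero_mul, mul_zero]
  have P_lam : ∀ {i x}, P i (!i) x → lam x = 0 := fun {i x} hx => by
    rw [← P_eq hx]; exact hlo i x
  have P_faith : ∀ {i x}, P i i x → (∀ z, P i (!i) z → x * z = 0) → x = 0 := fun {i x} hx hz => by
    have h1 : x * f = 0 := h.faithful (!i) x fun m => by
      have := hz _ (P_mk i (!i) m)
      rwa [← mul_assoc, ← mul_assoc, hx.2] at this
    rw [← hx.2, ← h.f_mul i, ← mul_assoc, h1, zero_mul]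
  -- products landing off the diagonal
  have off : ∀ {i j x y}, P i j x → P j (!i) y → D (x * y) = D x * y + x * D y := by
    intro i j x y hx hy
    have h1 := hL x y
    rw [P_zero' hy hx, P_zero' hy (P_D hx), P_zero' (P_D hy) hx, sub_zero, sub_zero, sub_zero,
      P_lam (P_mul hx hy), add_zero] at h1
    exact h1
  -- products inside a diagonal corner
  have diag : ∀ {i x y}, P i i x → P i i y → D (x * y) = D x * y + x * D y := by
    intro i x y hx hy
    refine sub_eq_zero.mp (P_faith (i := i) ?_ fun z hz => ?_)
    · have h1 := P_D (P_mul hx hy)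
      have h2 := P_mul (P_D hx) hy
      have h3 := P_mul hx (P_D hy)
      exact ⟨by rw [mul_sub, mul_add, h1.1, h2.1, h3.1], by rw [sub_mul, add_mul, h1.2, h2.2, h3.2]⟩
    · have h1 := off (P_mul hx hy) hz
      have h2 := off hx (P_mul hy hz)
      rw [off hy hz, ← mul_assoc, h1] at h2
      linear_combination (norm := noncomm_ring) h2
  have opp : ∀ {i x y}, P i (!i) x → P (!i) i y → D (x * y) = D x * y + x * D y := by
    intro i x y hx hy
    set c := lam (x * y - y * x)
    have cc : ∀ w, c * w = w * c := hc _
    have hxy := P_mul hx hy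
    have hyx := P_mul hy hx
    have h1 : D (x * y) - D (y * x) + c = D x * y - y * D x + (x * D y - D y * x) := by
      rw [← hL, map_sub]
    have g1 : D (x * y) + c * e i = D x * y + x * D y := by
      have h2 := congr(e i * $h1)
      rw [mul_add, mul_sub, (P_D hxy).1, ← (P_D hyx).1, ← mul_assoc (e i), h.orth, zero_mul,
        sub_zero, ← cc, mul_add, mul_sub, mul_sub, (P_mul (P_D hx) hy).1, (P_mul hx (P_D hy)).1,
        ← (P_mul hy (P_D hx)).1, ← (P_mul (P_D hy) hx).1, ← mul_assoc (e i), ← mul_assoc (e i),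
        h.orth, zero_mul, zero_mul, sub_zero, sub_zero] at h2
      exact h2
    have g2 : D (y * x) - c * e (!i) = D y * x + y * D x := by
      have h2 := congr(e (!i) * $h1)
      rw [mul_add, mul_sub, (P_D hyx).1, ← (P_D hxy).1, ← mul_assoc (e (!i)), h.orth', zero_mul,
        zero_sub, ← cc, mul_add, mul_sub, mul_sub, (P_mul (P_D hy) hx).1, (P_mul hy (P_D hx)).1,
        ← (P_mul hx (P_D hy)).1, ← (P_mul (P_D hx) hy).1, ← mul_assoc (e (!i)),
        ← mul_assoc (e (!i)), h.orth', zero_mul, zero_mul, zero_sub, zero_sub] at h2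
      linear_combination (norm := noncomm_ring) -h2
    -- `c` kills `x`
    have cx : c * x = 0 := by
      have k1 := off hxy hx
      have k2 := off hx hyx
      rw [← mul_assoc, k1, eq_sub_of_add_eq g1, eq_add_of_sub_eq g2] at k2
      have k3 : c * e i * x = c * x := by rw [mul_assoc, hx.1]
      have k4 : x * (c * e (!i)) = c * x := by rw [← mul_assoc, ← cc, mul_assoc, hx.2]
      refine eq_zero_of_eq_neg (V := R) ?_
      linear_combination (norm := noncomm_ring) -k2 - k3 - k4
    have hce : P i i (c * e i) := ⟨by rw [← mul_assoc, ← cc, mul_assoc, h.idem],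
      by rw [mul_assoc, h.idem]⟩
    -- `c ^ 2` kills `D w` as soon as `c` kills `w`
    have kill : ∀ {j w}, P i j w → c * w = 0 → (D (c * e i * w) = D (c * e i) * w + c * e i * D w) →
        c * (c * D w) = 0 := by
      intro j w hw hcw hder
      rw [mul_assoc c, hw.1, hcw, map_zero, mul_assoc c, (P_D hw).1] at hder
      have := congr(c * $hder)
      rw [mul_zero, mul_add, ← mul_assoc, cc, mul_assoc, hcw, mul_zero, zero_add] at this
      exact this.symm
    have kx := kill hx cx (off hce hx)
    have kxy := kill hxy (by rw [← mul_assoc, cx, zero_mul]) (diag hce hxy)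
    have c3 : c * (c * (c * e i)) = 0 := by
      have := congr(c * (c * $g1))
      rw [mul_add, mul_add, kxy, zero_add, mul_add, mul_add, ← mul_assoc c (D x), ← mul_assoc c (c * D x),
        kx, zero_mul, zero_add, ← mul_assoc c x, cx, zero_mul, mul_zero] at this
      exact this
    obtain ⟨d, hd⟩ : ∃ d, d = c * f := ⟨_, rfl⟩
    have dc : ∀ w, d * w = w * d := fun w => by
      rw [hd, mul_assoc, h.central, ← mul_assoc, cc, mul_assoc]
    have de : d * e i = c * e i := by rw [hd, mul_assoc, h.f_mul]
    have dce : ∀ w, d * (c * w) = c * (d * w) := fun w => by rw [← mul_assoc, dc, mul_assoc]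
    have ddc : ∀ w, d * d * w = w * (d * d) := fun w => by
      rw [mul_assoc, dc w, ← mul_assoc, dc w, mul_assoc]
    have d4 : d * d * (d * d) = 0 := by
      refine h.central_ext i (fun w => ?_) ?_ ?_
      · rw [mul_assoc, ddc w, ← mul_assoc, ddc w, mul_assoc]
      · simp only [mul_assoc]
        congr 3
        rw [hd, mul_assoc, h.f_idem]
      · simp only [mul_assoc]
        simp only [de, dce, c3, mul_zero]
    have c0 : c * f = 0 := hd.symm.trans (h.reduced_center d dc (h.reduced_center _ ddc d4))
    have : c * e i = 0 := by rw [← h.f_mul, ← mul_assoc, c0, zero_mul]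
    rw [this, add_zero] at g1
    exact g1
  have all : ∀ i j k l x y, P i j x → P k l y → D (x * y) = D x * y + x * D y := by
    intro i j k l x y hx hy
    obtain rfl | rfl : k = j ∨ k = !j := by cases k <;> cases j <;> simp
    · obtain rfl | rfl : l = i ∨ l = !i := by cases l <;> cases i <;> simp
      · obtain rfl | rfl : k = l ∨ k = !l := by cases k <;> cases l <;> simp
        · exact diag hx hy
        · exact opp hx hy
      · exact off hx hy
    · rw [P_zero hx hy, P_zero (P_D hx) hy, P_zero hx (P_D hy)]; simp
  have hxy : D (x * y) = D ((f * x) * (f * y)) := by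
    rw [mul_assoc, hDf, ← mul_assoc, ← h.central, mul_assoc, hDf]
  have hDx : D x * y = D (f * x) * (f * y) := by
    rw [hDf, ← mul_assoc, ← h.central, hfD]
  have hDy : x * D y = f * x * D (f * y) := by
    rw [hDf, h.central, mul_assoc, hfD]
  have all' : ∀ i j k l, D (e i * x * e j * (e k * y * e l))
      = D (e i * x * e j) * (e k * y * e l) + e i * x * e j * D (e k * y * e l) :=
    fun i j k l => all _ _ _ _ _ _ (P_mk i j x) (P_mk k l y)
  rw [hxy, hDx, hDy, h.decomp true x, h.decomp true y]
  simp only [add_mul, mul_add, map_add, all']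
  abel

/-- The decomposition of a Lie derivation which is central on the two idempotents. -/
theorem exists_decomposition_of_central (h : PeircePair f e)
    (hL : ∀ x y, L (x * y - y * x) = (L x * y - y * L x) + (x * L y - L y * x))
    (hLf : ∀ x, L (f * x) = L x) (hfL : ∀ x, f * L x = L x)
    (hLe : ∀ i x, L (e i) * x = x * L (e i)) :
    ∃ D lam : R →ₗ[ℂ] R, (∀ x y, D (x * y) = D x * y + x * D y) ∧
      (∀ x y, lam x * y = y * lam x) ∧ L = D + lam := by
  obtain ⟨D, lam, rfl, hc, hDf, hfD, hlo, hD⟩ := h.exists_homogeneous hL hLf hfL hLe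
  refine ⟨D, lam, h.derivation_of_homogeneous (lam := lam) (fun x y => ?_) hc hDf hfD hlo hD,
    hc, rfl⟩
  have := hL x y
  simp only [LinearMap.add_apply, add_mul, mul_add, hc _ y, hc _ x] at this
  rw [this, ← hc y x]
  abel

/-- The element `L (e i)` is central once its off-diagonal part vanishes. -/
theorem central_of_diagonal (h : PeircePair f e)
    (hL : ∀ x y, L (x * y - y * x) = (L x * y - y * L x) + (x * L y - L y * x))
    (hfL : ∀ x, f * L x = L x) (i : Bool)
    (hd : ∀ j, e j * L (e i) * e (!j) = 0) (x : R) : L (e i) * x = x * L (e i) := by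
  have hcomm : ∀ j, e j * L (e i) = L (e i) * e j := fun j => by
    have h1 : e j * L (e i) = e j * L (e i) * e j := by
      conv_lhs => rw [← hfL, h.central, ← mul_assoc, ← h.sum j, mul_add, hd, add_zero]
    have h2 : L (e i) * e j = e j * L (e i) * e j := by
      have := hd (!j)
      rw [Bool.not_not] at this
      conv_lhs => rw [← hfL, ← h.sum j, add_mul, add_mul, this, add_zero]
    rw [h1, h2]
  have off : ∀ j m, L (e i) * (e j * m * e (!j)) = e j * m * e (!j) * L (e i) := by
    intro j m
    have h1 := hL (e i) (e j * m * e (!j))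
    have h2 := congr(e j * $h1 * e (!j))
    have k1 : e j * (L (e i) * (e j * m * e (!j)) - e j * m * e (!j) * L (e i)) * e (!j)
        = L (e i) * (e j * m * e (!j)) - e j * m * e (!j) * L (e i) := by
      have t1 : e j * (L (e i) * (e j * m * e (!j))) = L (e i) * (e j * m * e (!j)) := by
        simp only [← mul_assoc]; rw [hcomm, mul_assoc (L (e i)), h.idem]
      have t2 : e j * m * e (!j) * L (e i) * e (!j) = e j * m * e (!j) * L (e i) := by
        rw [mul_assoc _ (L (e i)), ← hcomm, ← mul_assoc, mul_assoc _ (e (!j)) (e (!j)), h.idem]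
      rw [mul_sub, sub_mul, t1, mul_assoc (L (e i)), mul_assoc (e j * m), h.idem,
        ← mul_assoc (e j) _ (L (e i)), ← mul_assoc (e j), ← mul_assoc (e j), h.idem, t2]
    rw [mul_add, add_mul, k1] at h2
    rw [← sub_eq_zero]
    obtain rfl | rfl : i = j ∨ i = !j := by cases i <;> cases j <;> simp
    · rw [mul_assoc (e i * m), h.orth', mul_zero, sub_zero, ← mul_assoc (e i) (e i * m),
        ← mul_assoc (e i) (e i), h.idem, mul_sub, ← mul_assoc (e i), h.idem, sub_mul,
        mul_assoc (e i) (_ * e i), mul_assoc _ (e i) (e (!i)), h.orth, mul_zero, mul_zero,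
        sub_zero] at h2
      exact add_eq_right.mp h2.symm
    · rw [mul_assoc (e j * m), h.idem, ← mul_assoc (e (!j)) (e j * m),
        ← mul_assoc (e (!j)) (e j), h.orth', zero_mul, zero_mul, zero_sub, mul_sub,
        ← mul_assoc (e j), h.orth, zero_mul, zero_sub, neg_mul, mul_assoc (e j) (_ * e (!j)),
        mul_assoc _ (e (!j)) (e (!j)), h.idem, map_neg, mul_neg, neg_mul, ← mul_assoc (e j)] at h2
      exact add_eq_right.mp h2.symm
  have diag : ∀ j m, L (e i) * (e j * m * e j) = e j * m * e j * L (e i) := by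
    intro j m
    rw [← sub_eq_zero]
    set w := L (e i) * (e j * m * e j) - e j * m * e j * L (e i) with hw
    have hwj : w * e j = w := by
      rw [hw, sub_mul, mul_assoc _ (L (e i)), ← hcomm, ← mul_assoc _ (e j), mul_assoc _ (e j) (e j),
        h.idem, mul_assoc (L (e i)), mul_assoc _ (e j) (e j), h.idem]
    have hwf : w * f = 0 := by
      refine h.faithful (!j) w fun n => ?_
      have h1 : w * (e j * n * e (!j)) = 0 := by
        rw [hw, sub_mul, mul_assoc _ (L (e i)), off, mul_assoc (L (e i))]
        have := off j (m * e j * (e j * n))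
        simp only [mul_assoc] at this ⊢
        rw [this, sub_self]
      rwa [← mul_assoc, ← mul_assoc, hwj] at h1
    rw [← hwj, ← h.f_mul, ← mul_assoc, hwf, zero_mul]
  have hfx : L (e i) * (f * x) = f * x * L (e i) := by
    have off' := fun m => off false m
    have off'' := fun m => off true m
    simp only [Bool.not_false, Bool.not_true] at off' off''
    simp only [h.decomp true x, mul_add, add_mul, diag, off', off'', Bool.not_true]
  rw [← mul_assoc, ← h.central, hfL, h.central, mul_assoc, hfL] at hfx
  exact hfx

/-- A Lie derivation of a ring with a Peirce pair, commutative on the complement of `f`,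
is the sum of a derivation and a central map vanishing on commutators. -/
theorem exists_decomposition (h : PeircePair f e)
    (hL : ∀ x y, L (x * y - y * x) = (L x * y - y * L x) + (x * L y - L y * x))
    (hab : ∀ x y, f * (x * y - y * x) = x * y - y * x) :
    ∃ D lam : R →ₗ[ℂ] R, (∀ x y, D (x * y) = D x * y + x * D y) ∧
      (∀ x z, lam x * z = z * lam x) ∧ (∀ x y, lam (x * y - y * x) = 0) ∧ L = D + lam := by
  have map_center : ∀ {L : R →ₗ[ℂ] R},
      (∀ x y, L (x * y - y * x) = (L x * y - y * L x) + (x * L y - L y * x)) →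
      ∀ z, (∀ x, z * x = x * z) → ∀ x, L z * x = x * L z := by
    intro L hL z hz x
    have := hL z x
    rw [hz x, sub_self, map_zero, hz (L x), sub_self, add_zero] at this
    exact sub_eq_zero.mp this.symm
  -- cut down to `f`
  let L₁ : R →ₗ[ℂ] R := LinearMap.mulLeft ℂ f ∘ₗ L ∘ₗ LinearMap.mulLeft ℂ f
  have L₁_apply : ∀ x, L₁ x = f * L (f * x) := fun x => rfl
  have ff : ∀ x, f * (f * x) = f * x := fun x => by rw [← mul_assoc, h.f_idem]
  have hL₁ : ∀ x y, L₁ (x * y - y * x) = (L₁ x * y - y * L₁ x) + (x * L₁ y - L₁ y * x) := by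
    intro x y
    have h1 := hL (f * x) (f * y)
    have hm : ∀ x y, f * x * (f * y) = f * (x * y) := fun x y => by
      rw [mul_assoc, ← mul_assoc x, ← h.central x, mul_assoc, ff]
    rw [hm, hm, ← mul_sub] at h1
    have hm1 : ∀ x y, y * (f * x) = f * (y * x) := fun x y => by
      rw [← mul_assoc, ← h.central, mul_assoc]
    simp only [L₁_apply, h1]
    simp only [mul_assoc, hm1, mul_add, mul_sub, ff]
  have hfL₁ : ∀ x, f * L₁ x = L₁ x := fun x => by rw [L₁_apply, ff]
  have hLf₁ : ∀ x, L₁ (f * x) = L₁ x := fun x => by rw [L₁_apply, L₁_apply, ff]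
  -- remove the off-diagonal part of `L₁ (e true)`
  obtain ⟨a, ha⟩ : ∃ a, a = L₁ (e true) := ⟨_, rfl⟩
  obtain ⟨s, hs⟩ : ∃ s, s = e false * a * e true - e true * a * e false := ⟨_, rfl⟩
  have hfs : f * s = s := by rw [hs, mul_sub]; simp only [← mul_assoc, h.f_mul]
  let A : R →ₗ[ℂ] R := LinearMap.mulLeft ℂ s - LinearMap.mulRight ℂ s
  have A_apply : ∀ x, A x = s * x - x * s := fun x => rfl
  have hA : ∀ x y, A (x * y) = A x * y + x * A y := fun x y => by
    simp only [A_apply]; noncomm_ring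
  have hL₂ : ∀ x y, (L₁ - A) (x * y - y * x) = ((L₁ - A) x * y - y * (L₁ - A) x)
      + (x * (L₁ - A) y - (L₁ - A) y * x) := fun x y => by
    simp only [LinearMap.sub_apply, hL₁, map_sub A, hA]; noncomm_ring
  have hfL₂ : ∀ x, f * (L₁ - A) x = (L₁ - A) x := fun x => by
    rw [LinearMap.sub_apply, mul_sub, hfL₁, A_apply, mul_sub, ← mul_assoc, ← mul_assoc, hfs,
      h.central x, mul_assoc x, hfs]
  have hLf₂ : ∀ x, (L₁ - A) (f * x) = (L₁ - A) x := fun x => by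
    have hAf : A (f * x) = A x := by
      rw [A_apply, A_apply, ← mul_assoc, ← h.central s, hfs, h.central x, mul_assoc x, hfs]
    rw [LinearMap.sub_apply L₁ A, LinearMap.sub_apply L₁ A, hLf₁, hAf]
  have hot : e true * e false = 0 := h.orth true
  have hto : e false * e true = 0 := h.orth false
  have hde : (L₁ - A) (e true) = a - e false * a * e true - e true * a * e false := by
    have h1 : s * e true = e false * a * e true := by
      rw [hs, sub_mul, mul_assoc _ (e true), h.idem, mul_assoc _ (e false), hto, mul_zero, sub_zero]
    have h2 : e true * s = - (e true * a * e false) := by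
      rw [hs, mul_sub]; simp only [← mul_assoc, h.idem, hot, zero_mul, zero_sub]
    rw [LinearMap.sub_apply, A_apply, ← ha, h1, h2]; abel
  have hcen : ∀ x, (L₁ - A) (e true) * x = x * (L₁ - A) (e true) := by
    refine h.central_of_diagonal hL₂ hfL₂ true fun j => ?_
    rw [hde]
    cases j
    · simp only [Bool.not_false, mul_sub, sub_mul, ← mul_assoc, h.idem, hto, zero_mul]
      simp only [mul_assoc, h.idem, sub_self]
    · simp only [Bool.not_true, mul_sub, sub_mul, ← mul_assoc, h.idem, hot, zero_mul]
      simp only [mul_assoc, h.idem, sub_self, sub_zero]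
  have hLe₂ : ∀ i x, (L₁ - A) (e i) * x = x * (L₁ - A) (e i) := by
    intro i x
    cases i
    · have h1 : e false = f - e true := by rw [← h.sum true]; simp
      rw [h1, map_sub, sub_mul, mul_sub, hcen, map_center hL₂ f h.central x]
    · exact hcen x
  obtain ⟨D, lam, hD, hlam, hLD⟩ := h.exists_decomposition_of_central hL₂ hLf₂ hfL₂ hLe₂
  have hL₁D : ∀ x, L₁ x = D x + A x + lam x := fun x => by
    have := congr($hLD x)
    rw [LinearMap.sub_apply, LinearMap.add_apply] at this
    rw [eq_add_of_sub_eq this]; abel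
  have hD' : ∀ x y, (D + A) (x * y) = (D + A) x * y + x * (D + A) y := fun x y => by
    simp only [LinearMap.add_apply, hD, hA]; noncomm_ring
  have hab' : ∀ u y, (u - f * u) * y = y * (u - f * u) := fun u y => by
    have := hab u y
    rw [mul_sub, ← mul_assoc, ← mul_assoc, h.central y, mul_assoc y] at this
    rw [sub_mul, mul_sub]
    linear_combination (norm := noncomm_ring) -this
  have hl' : ∀ x z, (L - (D + A)) x * z = z * (L - (D + A)) x := fun x z => by
    have h1 := hab' (L x) z
    have h2 := map_center hL _ (hab' x)
    have h3 : (L - (D + A)) x = (L x - f * L x) + f * L (x - f * x) + lam x := by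
      have := hL₁D x
      rw [L₁_apply] at this
      rw [map_sub, mul_sub, this, LinearMap.sub_apply, LinearMap.add_apply]
      abel
    rw [h3, add_mul, add_mul, h1, hlam, mul_assoc f, h2, ← mul_assoc, h.central z, mul_assoc z,
      mul_add, mul_add]
  refine ⟨D + A, L - (D + A), hD', hl', fun x y => ?_, by simp⟩
  have hLs : ∀ x, L x = (D + A) x + (L - (D + A)) x := fun x => by
    rw [LinearMap.sub_apply]; abel
  rw [LinearMap.sub_apply, hL, map_sub, hD', hD', hLs x, hLs y, add_mul, mul_add, add_mul, mul_add,
    hl' x, hl' y]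
  abel

end LieDerivation
end PeircePair

section Projections

variable {H : Type*} [NormedAddCommGroup H] [InnerProductSpace ℂ H] [CompleteSpace H]

/-- The orthogonal projection onto the closure of a subspace. -/
noncomputable abbrev closureProj (K : Submodule ℂ H) : H →L[ℂ] H :=
  K.topologicalClosure.starProjection

theorem closureProj_isStarProjection (K : Submodule ℂ H) : IsStarProjection (closureProj K) :=
  isStarProjection_starProjection

theorem topologicalClosure_invariant {H : Type*} [NormedAddCommGroup H] [InnerProductSpace ℂ H]
    {K : Submodule ℂ H} {y : H →L[ℂ] H}
    (hy : ∀ v ∈ K, y v ∈ K) : ∀ v ∈ K.topologicalClosure, y v ∈ K.topologicalClosure :=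
  fun _ hv => map_mem_closure y.continuous hv hy

theorem closureProj_commute {K : Submodule ℂ H} {y : H →L[ℂ] H}
    (hy : ∀ v ∈ K, y v ∈ K) (hy' : ∀ v ∈ K, star y v ∈ K) : Commute (closureProj K) y := by
  have key : ∀ y : H →L[ℂ] H, (∀ v ∈ K, y v ∈ K) →
      closureProj K * y * closureProj K = y * closureProj K := by
    intro y hy
    ext v
    exact Submodule.starProjection_eq_self_iff.mpr
      (topologicalClosure_invariant hy _ (Submodule.starProjection_apply_mem _ _))
  have h1 := key y hy
  have h2 := congr(star $(key _ hy'))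
  simp only [star_mul, star_star, (closureProj_isStarProjection K).isSelfAdjoint.star_eq] at h2
  rw [← mul_assoc, h1] at h2
  exact h2.symm

theorem VonNeumannAlgebra.closureProj_mem (M : VonNeumannAlgebra H) {K : Submodule ℂ H}
    (hK : ∀ y ∈ M.commutant, ∀ v ∈ K, y v ∈ K) : closureProj K ∈ M := by
  rw [← M.commutant_commutant, mem_commutant_iff]
  exact fun y hy => (closureProj_commute (hK y hy) (hK _ (star_mem hy))).eq.symm

theorem norm_le_of_commute_projection {T E : H →L[ℂ] H} (hE : IsStarProjection E)
    (hTE : Commute E T) {m : ℝ} (h1 : ‖T * E‖ ≤ m) (h2 : ‖T * (1 - E)‖ ≤ m) : ‖T‖ ≤ m := by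
  have hm : 0 ≤ m := (norm_nonneg _).trans h1
  have pyth : ∀ v, ‖v‖ ^ 2 = ‖E v‖ ^ 2 + ‖(1 - E) v‖ ^ 2 := fun v => by
    have : inner ℂ (E v) ((1 - E) v) = 0 := by
      rw [← ContinuousLinearMap.adjoint_inner_right, ← ContinuousLinearMap.star_eq_adjoint,
        hE.isSelfAdjoint.star_eq, ← mul_apply_eq_comp, mul_sub, mul_one,
        hE.isIdempotentElem.eq, sub_self]
      simp
    have h := norm_add_sq_eq_norm_sq_add_norm_sq_of_inner_eq_zero _ _ this
    rw [← add_apply, add_sub_cancel, one_apply_eq_self] at h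
    simpa [sq] using h
  refine T.opNorm_le_bound hm fun v => ?_
  have b1 : ‖E (T v)‖ ≤ m * ‖E v‖ := by
    have : E (T v) = (T * E) (E v) := by
      rw [← mul_apply_eq_comp, hTE.eq, ← mul_apply_eq_comp, mul_assoc,
        hE.isIdempotentElem.eq]
    rw [this]
    exact (T * E).le_of_opNorm_le h1 _
  have b2 : ‖(1 - E) (T v)‖ ≤ m * ‖(1 - E) v‖ := by
    have : (1 - E) (T v) = (T * (1 - E)) ((1 - E) v) := by
      rw [← mul_apply_eq_comp, ← mul_apply_eq_comp, mul_assoc,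
        hE.isIdempotentElem.one_sub.eq, sub_mul, mul_sub, hTE.eq, one_mul, mul_one]
    rw [this]
    exact (T * (1 - E)).le_of_opNorm_le h2 _
  refine abs_le_of_sq_le_sq' ?_ (by positivity) |>.2
  rw [pyth, mul_pow, pyth v, mul_add, ← mul_pow, ← mul_pow]
  gcongr

theorem norm_sub_half_le {A : Type*} [CStarAlgebra A] [PartialOrder A] [StarOrderedRing A]
    {b : A} (hb : 0 ≤ b) {r : ℝ} (hr : ‖b‖ ≤ r) :
    ‖b - algebraMap ℝ A (r / 2)‖ ≤ r / 2 := by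
  have hr0 : 0 ≤ r := (norm_nonneg _).trans hr
  have hsa : IsSelfAdjoint b := .of_nonneg hb
  rcases subsingleton_or_nontrivial A
  · rw [Subsingleton.elim (b - _) 0, norm_zero]
    positivity
  have h : cfc (fun x : ℝ => x - r / 2) b = b - algebraMap ℝ A (r / 2) := by
    rw [cfc_sub (fun x : ℝ => x) (fun _ => r / 2) b, cfc_id' ℝ b, cfc_const (r / 2) b]
  rw [← h]
  refine norm_cfc_le (by positivity) fun x hx => ?_
  have h0 : 0 ≤ x := spectrum_nonneg_of_nonneg hb hx
  have h1 : x ≤ r := (Real.le_norm_self x).trans ((spectrum.norm_le_norm_of_mem hx).trans hr)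
  rw [Real.norm_eq_abs, abs_le]
  constructor <;> linarith

theorem IsStarProjection.norm_mul_le {E : H →L[ℂ] H} (hE : IsStarProjection E) (T : H →L[ℂ] H) :
    ‖T * E‖ ≤ ‖T‖ := by
  have hE1 : ‖E‖ ≤ 1 := by
    have h : ‖E‖ * ‖E‖ = ‖E‖ := by
      rw [← CStarRing.norm_star_mul_self, hE.isSelfAdjoint.star_eq, hE.isIdempotentElem.eq]
    nlinarith [norm_nonneg E]
  exact (_root_.norm_mul_le _ _).trans (mul_le_of_le_one_right (norm_nonneg _) hE1)

set_option maxHeartbeats 800000 in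
/-- If `a` is within `r` of the scalar `t` on the range of `F`, then a spectral projection of `a`
splits this range into two parts on which `a` is within `r / 2` of a scalar. -/
theorem exists_bisecting_subspace {a F : H →L[ℂ] H} (ha : IsSelfAdjoint a)
    (hF : IsStarProjection F)
    (hFa : Commute F a) {t r : ℝ} (hr : ‖(a - algebraMap ℝ _ t) * F‖ ≤ r) :
    ∃ K : Submodule ℂ H, (∀ y, Commute a y → ∀ v ∈ K, y v ∈ K) ∧
      ‖(a - algebraMap ℝ _ (t + r / 2)) * (F * closureProj K)‖ ≤ r / 2 ∧
      ‖(a - algebraMap ℝ _ (t - r / 2)) * (F * (1 - closureProj K))‖ ≤ r / 2 := by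
  set s := a - algebraMap ℝ (H →L[ℂ] H) t with hs
  have hsa : IsSelfAdjoint s := ha.sub (.algebraMap _ (.all t))
  have hcomm : ∀ y, Commute a y → Commute s⁺ y := fun y hy =>
    (hy.sub_left (Algebra.commutes t y)).cfcₙ_real _
  have hcomm' : ∀ y, Commute a y → Commute s⁻ y := fun y hy =>
    (hy.sub_left (Algebra.commutes t y)).cfcₙ_real _
  have hK : ∀ y, Commute a y → ∀ v ∈ s⁺.range, y v ∈ s⁺.range := by
    rintro y hy _ ⟨w, rfl⟩
    exact ⟨y w, congr($(hcomm y hy) w)⟩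
  refine ⟨s⁺.range, hK, ?_⟩
  set E := closureProj s⁺.range
  have hE : IsStarProjection E := closureProj_isStarProjection _
  have hEF : Commute E F := closureProj_commute (hK F hFa.symm)
    (by rw [hF.isSelfAdjoint.star_eq]; exact hK F hFa.symm)
  have hEp : E * s⁺ = s⁺ := by
    ext v
    exact Submodule.starProjection_eq_self_iff.mpr
      (Submodule.le_topologicalClosure _ ⟨v, rfl⟩)
  have hpE : s⁺ * E = s⁺ := by
    have := congr(star $hEp)
    rwa [star_mul, hE.isSelfAdjoint.star_eq, (CFC.posPart_nonneg s).isSelfAdjoint.star_eq] at this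
  have hnE : s⁻ * E = 0 := by
    have h : s⁺.range.topologicalClosure ≤ s⁻.ker := by
      refine Submodule.topologicalClosure_minimal _ ?_ s⁻.isClosed_ker
      rintro _ ⟨w, rfl⟩
      exact congr($(CFC.negPart_mul_posPart s) w)
    ext v
    exact h (Submodule.starProjection_apply_mem _ v)
  have hsum : s⁺ - s⁻ = s := CFC.posPart_sub_negPart s hsa
  have hsE : s * E = s⁺ := by
    conv_lhs => rw [← hsum, sub_mul, hpE, hnE, sub_zero]
  have hsE' : s * (1 - E) = -s⁻ := by
    rw [mul_sub, mul_one, hsE, sub_eq_iff_eq_add, neg_add_eq_sub, hsum]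
  have hFF := hF.isIdempotentElem.eq
  have hpos : ∀ b : H →L[ℂ] H, 0 ≤ b → Commute b F → 0 ≤ b * F := fun b hb hbF => by
    have := hF.isSelfAdjoint.conjugate_nonneg hb
    rwa [← hbF.eq, mul_assoc, hFF] at this
  have hEF' : Commute (1 - E) F := (Commute.one_left F).sub_left hEF
  have hFE : IsStarProjection (F * E) := hF.mul hE hEF.symm
  have hFE' : IsStarProjection (F * (1 - E)) := hF.mul hE.one_sub hEF'.symm
  have e1 : s * (F * E) = s⁺ * F := by rw [← hEF.eq, ← mul_assoc, hsE]
  have e2 : s * (F * (1 - E)) = -(s⁻ * F) := by rw [← hEF'.eq, ← mul_assoc, hsE', neg_mul]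
  constructor
  · have hb : ‖s⁺ * F‖ ≤ r := by
      rw [← e1, ← mul_assoc]
      exact (hE.norm_mul_le _).trans hr
    have := norm_sub_half_le (hpos _ (CFC.posPart_nonneg s) (hcomm F hFa.symm)) hb
    refine le_of_eq_of_le ?_ ((hFE.norm_mul_le _).trans this)
    congr 1
    rw [map_add, ← sub_sub, ← hs, sub_mul s, sub_mul (s⁺ * F), e1]
    congr 1
    rw [mul_assoc, ← mul_assoc F, hFF, ← hEF.eq, ← mul_assoc, hpE]
  · have hb : ‖s⁻ * F‖ ≤ r := by
      rw [← norm_neg, ← e2, ← mul_assoc]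
      exact (hE.one_sub.norm_mul_le _).trans hr
    have := norm_sub_half_le (hpos _ (CFC.negPart_nonneg s) (hcomm' F hFa.symm)) hb
    refine le_of_eq_of_le ?_ ((hFE'.norm_mul_le _).trans this)
    have e3 : s⁻ * F * (F * (1 - E)) = s⁻ * F := by
      rw [mul_assoc, ← mul_assoc F, hFF, ← hEF'.eq, ← mul_assoc, mul_sub, mul_one, hnE, sub_zero]
    have e4 : a - algebraMap ℝ _ (t - r / 2) = s + algebraMap ℝ _ (r / 2) := by
      rw [hs, map_sub]
      abel
    rw [← norm_neg, e4, add_mul s, e2, sub_mul (s⁻ * F), e3, neg_add, neg_neg, ← sub_eq_add_neg]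

theorem VonNeumannAlgebra.commute_of_commute_projections (M : VonNeumannAlgebra H)
    {a x : H →L[ℂ] H} (haM : a ∈ M) (ha : IsSelfAdjoint a)
    (hx : ∀ E ∈ M, IsStarProjection E → Commute E x) : Commute a x := by
  set c := a * x - x * a with hc
  have key : ∀ n : ℕ, ∃ F ∈ M, IsStarProjection F ∧ Commute F a ∧ ∃ t : ℝ,
      ‖(a - algebraMap ℝ _ t) * F‖ ≤ ‖a‖ / 2 ^ n ∧ ‖c‖ ≤ ‖c * F‖ := by
    intro n
    induction n with
    | zero => exact ⟨1, one_mem _, .one _, .one_left _, 0, by simp, by simp⟩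
    | succ n ih =>
      obtain ⟨F, hFM, hF, hFa, t, hr, hcF⟩ := ih
      obtain ⟨K, hK, h1, h2⟩ := exists_bisecting_subspace ha hF hFa hr
      have hEM : closureProj K ∈ M := M.closureProj_mem fun y hy =>
        hK y ((mem_commutant_iff.mp hy) a haM)
      have hE := closureProj_isStarProjection K
      have hEc : ∀ y, Commute a y → Commute (closureProj K) y := fun y hy =>
        closureProj_commute (hK y hy) (hK _ (by simpa [ha.star_eq] using hy.star_star))
      have hEF := hEc F hFa.symm
      have hEa := hEc a (.refl a)
      have hEx := hx _ hEM hE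
      have hEcc : Commute (closureProj K) (c * F) :=
        ((hEa.mul_right hEx).sub_right (hEx.mul_right hEa)).mul_right hEF
      rw [div_div, ← pow_succ] at h1 h2
      by_contra! hcon
      have n1 := hcon _ (mul_mem hFM hEM) (hF.mul hE hEF.symm) (hFa.mul_left hEa) _ h1
      have n2 := hcon _ (mul_mem hFM (sub_mem (one_mem _) hEM))
        (hF.mul hE.one_sub ((Commute.one_right F).sub_right hEF.symm))
        (hFa.mul_left ((Commute.one_left a).sub_left hEa)) _ h2
      rw [← mul_assoc] at n1 n2
      have := norm_le_of_commute_projection hE hEcc (le_max_left _ _) (le_max_right _ _)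
      exact absurd (hcF.trans this) (not_le.mpr (max_lt n1 n2))
  have bound : ∀ n : ℕ, ‖c‖ ≤ 2 * ‖x‖ * (‖a‖ / 2 ^ n) := by
    intro n
    obtain ⟨F, hFM, hF, hFa, t, hr, hcF⟩ := key n
    refine hcF.trans ?_
    have hFx := hx F hFM hF
    have : c * F = (a - algebraMap ℝ _ t) * F * x - x * ((a - algebraMap ℝ _ t) * F) := by
      have ht := Algebra.commutes t x
      have ht' : algebraMap ℝ _ t * (x * F) = x * (algebraMap ℝ _ t * F) := by
        rw [← mul_assoc, ht, mul_assoc]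
      rw [hc, mul_assoc _ F x, hFx.eq, sub_mul, sub_mul, sub_mul, mul_sub, ht']
      noncomm_ring
    rw [this]
    calc _ ≤ ‖(a - algebraMap ℝ _ t) * F * x‖ + ‖x * ((a - algebraMap ℝ _ t) * F)‖ := norm_sub_le _ _
      _ ≤ ‖a‖ / 2 ^ n * ‖x‖ + ‖x‖ * (‖a‖ / 2 ^ n) := by
        gcongr
        · exact (norm_mul_le _ _).trans (by gcongr)
        · exact (norm_mul_le _ _).trans (by gcongr)
      _ = _ := by ring
  have lim : Filter.Tendsto (fun n : ℕ => 2 * ‖x‖ * (‖a‖ / 2 ^ n)) Filter.atTop (nhds 0) := by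
    have := (tendsto_const_nhds (x := ‖a‖)).div_atTop
      (tendsto_pow_atTop_atTop_of_one_lt (one_lt_two (α := ℝ)))
    simpa using this.const_mul (2 * ‖x‖)
  have : ‖c‖ ≤ 0 := ge_of_tendsto' lim bound
  exact sub_eq_zero.mp (norm_le_zero_iff.mp this)

end Projections

namespace VonNeumannAlgebra

variable {H : Type*} [NormedAddCommGroup H] [InnerProductSpace ℂ H] [CompleteSpace H]

theorem smul_mem (M : VonNeumannAlgebra H) (c : ℂ) {a : H →L[ℂ] H} (ha : a ∈ M) : c • a ∈ M :=
  M.toStarSubalgebra.smul_mem ha c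

theorem commute_of_forall_projection (M : VonNeumannAlgebra H) {a x : H →L[ℂ] H} (haM : a ∈ M)
    (hx : ∀ E ∈ M, IsStarProjection E → Commute E x) : Commute a x := by
  have h1 := M.commute_of_commute_projections (add_mem haM (star_mem haM))
    (IsSelfAdjoint.add_star_self a) hx
  have h2 := M.commute_of_commute_projections (a := Complex.I • (a - star a))
    (M.smul_mem _ (sub_mem haM (star_mem haM)))
    (by simp [IsSelfAdjoint, star_smul, ← smul_neg]) hx
  rw [Commute.smul_left_iff₀ Complex.I_ne_zero] at h2
  have h3 := h1.add_left h2
  rw [add_add_sub_cancel, ← two_smul ℂ a, Commute.smul_left_iff₀ two_ne_zero] at h3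
  exact h3

/-- A subspace is invariant if every element of the algebra maps it into itself. -/
def IsInvariant (N : VonNeumannAlgebra H) (K : Submodule ℂ H) : Prop :=
  ∀ y ∈ N, ∀ v ∈ K, y v ∈ K

protected theorem IsInvariant.sSup {N : VonNeumannAlgebra H} {s : Set (Submodule ℂ H)}
    (h : ∀ K ∈ s, N.IsInvariant K) : N.IsInvariant (sSup s) := by
  intro y hy
  have : sSup s ≤ (sSup s).comap (y : H →ₗ[ℂ] H) :=
    sSup_le fun K hK v hv => le_sSup hK (h K hK y hy v hv)
  exact fun v hv => this hv

protected theorem IsInvariant.sup {N : VonNeumannAlgebra H} {K₁ K₂ : Submodule ℂ H}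
    (h₁ : N.IsInvariant K₁) (h₂ : N.IsInvariant K₂) : N.IsInvariant (K₁ ⊔ K₂) := by
  rw [← sSup_pair]
  refine IsInvariant.sSup ?_
  rintro K (rfl | rfl) <;> assumption

theorem isInvariant_range {M : VonNeumannAlgebra H} {a : H →L[ℂ] H} (ha : a ∈ M) :
    M.commutant.IsInvariant a.range := by
  rintro y hy _ ⟨w, rfl⟩
  exact ⟨y w, congr($(mem_commutant_iff.mp hy a ha) w)⟩

/-- The smallest closed subspace containing the image of `P` under every element of `M`. -/
def cyclicClosure (M : VonNeumannAlgebra H) (P : Submodule ℂ H) : Submodule ℂ H :=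
  (Submodule.span ℂ {w | ∃ m ∈ M, ∃ v ∈ P, m v = w}).topologicalClosure

variable {M : VonNeumannAlgebra H} {P Q : Submodule ℂ H}

theorem isClosed_cyclicClosure : IsClosed (M.cyclicClosure P : Set H) :=
  Submodule.isClosed_topologicalClosure _

theorem cyclicClosure_le {K : Submodule ℂ H} (hK : IsClosed (K : Set H))
    (h : ∀ m ∈ M, ∀ v ∈ P, m v ∈ K) : M.cyclicClosure P ≤ K := by
  refine Submodule.topologicalClosure_minimal _ (Submodule.span_le.mpr ?_) hK
  rintro _ ⟨m, hm, v, hv, rfl⟩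
  exact h m hm v hv

theorem apply_mem_cyclicClosure {m : H →L[ℂ] H} (hm : m ∈ M) {v : H} (hv : v ∈ P) :
    m v ∈ M.cyclicClosure P :=
  Submodule.le_topologicalClosure _ (Submodule.subset_span ⟨m, hm, v, hv, rfl⟩)

theorem le_cyclicClosure : P ≤ M.cyclicClosure P := fun _ hv =>
  apply_mem_cyclicClosure (one_mem M) hv

theorem apply_mem_cyclicClosure_of_forall {y : H →L[ℂ] H}
    (h : ∀ m ∈ M, ∀ v ∈ P, y (m v) ∈ M.cyclicClosure P) :
    ∀ v ∈ M.cyclicClosure P, y v ∈ M.cyclicClosure P := by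
  have : M.cyclicClosure P ≤ (M.cyclicClosure P).comap (y : H →ₗ[ℂ] H) :=
    cyclicClosure_le (isClosed_cyclicClosure.preimage y.continuous) h
  exact fun v hv => this hv

theorem isInvariant_cyclicClosure : M.IsInvariant (M.cyclicClosure P) := fun _ hy =>
  apply_mem_cyclicClosure_of_forall fun _ hm _ hv => apply_mem_cyclicClosure (mul_mem hy hm) hv

protected theorem IsInvariant.cyclicClosure (hP : M.commutant.IsInvariant P) :
    M.commutant.IsInvariant (M.cyclicClosure P) := fun y hy =>
  apply_mem_cyclicClosure_of_forall fun m hm v hv => by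
    have : y (m v) = m (y v) := congr($((mem_commutant_iff.mp hy m hm).symm) v)
    rw [this]
    exact apply_mem_cyclicClosure hm (hP y hy v hv)

theorem cyclicClosure_le_cyclicClosure (h : P ≤ M.cyclicClosure Q) :
    M.cyclicClosure P ≤ M.cyclicClosure Q :=
  cyclicClosure_le isClosed_cyclicClosure fun m hm v hv => isInvariant_cyclicClosure m hm v (h hv)

theorem cyclicClosure_mono (h : P ≤ Q) : M.cyclicClosure P ≤ M.cyclicClosure Q :=
  cyclicClosure_le_cyclicClosure (h.trans le_cyclicClosure)

theorem topologicalClosure_cyclicClosure :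
    (M.cyclicClosure P).topologicalClosure = M.cyclicClosure P :=
  isClosed_cyclicClosure.submodule_topologicalClosure_eq

theorem closureProj_cyclicClosure_eq_self_iff {v : H} :
    closureProj (M.cyclicClosure P) v = v ↔ v ∈ M.cyclicClosure P := by
  rw [Submodule.starProjection_eq_self_iff, topologicalClosure_cyclicClosure]

theorem closureProj_cyclicClosure_apply_mem (v : H) :
    closureProj (M.cyclicClosure P) v ∈ M.cyclicClosure P :=
  topologicalClosure_cyclicClosure.le (Submodule.starProjection_apply_mem _ v)

theorem closureProj_cyclicClosure_commute {a : H →L[ℂ] H} (ha : a ∈ M) :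
    Commute (closureProj (M.cyclicClosure P)) a :=
  closureProj_commute (isInvariant_cyclicClosure a ha) (isInvariant_cyclicClosure _ (star_mem ha))

theorem range_le_cyclicClosure_range_star {a : H →L[ℂ] H} (ha : a ∈ M) :
    a.range ≤ M.cyclicClosure (star a).range := by
  have h : closureProj (star a).range * star a = star a := by
    ext v
    exact Submodule.starProjection_eq_self_iff.mpr
      (Submodule.le_topologicalClosure _ ⟨v, rfl⟩)
  have h' := congr(star $h)
  rw [star_mul, star_star, (closureProj_isStarProjection _).isSelfAdjoint.star_eq] at h'
  rintro _ ⟨v, rfl⟩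
  have hv : a v = a (closureProj (star a).range v) := congr($h'.symm v)
  change a v ∈ _
  rw [hv]
  exact isInvariant_cyclicClosure a ha _ (Submodule.topologicalClosure_minimal _ le_cyclicClosure
    isClosed_cyclicClosure (Submodule.starProjection_apply_mem _ v))

/-- Orthogonal subspaces, each invariant under the commutant and each contained in the cyclic
closure of the other. -/
structure IsOrthoPair (M : VonNeumannAlgebra H) (p : Submodule ℂ H × Submodule ℂ H) : Prop where
  invariant_fst : M.commutant.IsInvariant p.1
  invariant_snd : M.commutant.IsInvariant p.2
  ortho : p.1 ⟂ p.2
  fst_le : p.1 ≤ M.cyclicClosure p.2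
  snd_le : p.2 ≤ M.cyclicClosure p.1

theorem exists_maximal_isOrthoPair (M : VonNeumannAlgebra H) :
    ∃ p, Maximal (· ∈ {p | M.IsOrthoPair p}) p := by
  refine zorn_le₀ _ fun c hc hchain =>
    ⟨(sSup (Prod.fst '' c), sSup (Prod.snd '' c)), ⟨?_, ?_, ?_, ?_, ?_⟩, fun z hz =>
      ⟨le_sSup (Set.mem_image_of_mem _ hz), le_sSup (Set.mem_image_of_mem _ hz)⟩⟩
  · refine IsInvariant.sSup ?_
    rintro _ ⟨p, hp, rfl⟩
    exact (hc hp).invariant_fst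
  · refine IsInvariant.sSup ?_
    rintro _ ⟨p, hp, rfl⟩
    exact (hc hp).invariant_snd
  · rw [Submodule.isOrtho_sSup_left]
    rintro _ ⟨p, hp, rfl⟩
    rw [Submodule.isOrtho_sSup_right]
    rintro _ ⟨q, hq, rfl⟩
    rcases hchain.total hp hq with h | h
    · exact (hc hq).ortho.mono_left h.1
    · exact (hc hp).ortho.mono_right h.2
  · refine sSup_le ?_
    rintro _ ⟨p, hp, rfl⟩
    exact (hc hp).fst_le.trans (cyclicClosure_mono (le_sSup (Set.mem_image_of_mem _ hp)))
  · refine sSup_le ?_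
    rintro _ ⟨p, hp, rfl⟩
    exact (hc hp).snd_le.trans (cyclicClosure_mono (le_sSup (Set.mem_image_of_mem _ hp)))

theorem isOrtho_range_of_closureProj_mul_eq_zero {a : H →L[ℂ] H} {K : Submodule ℂ H}
    (ha : closureProj K * a = 0) : a.range ⟂ K := by
  rw [Submodule.isOrtho_iff_inner_eq]
  rintro _ ⟨v, rfl⟩ w hw
  have hw' : closureProj K w = w :=
    Submodule.starProjection_eq_self_iff.mpr (Submodule.le_topologicalClosure _ hw)
  rw [← hw', ← ContinuousLinearMap.adjoint_inner_left, ← ContinuousLinearMap.star_eq_adjoint,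
    (closureProj_isStarProjection K).isSelfAdjoint.star_eq]
  have : closureProj K (a v) = 0 := congr($ha v)
  simp [this]

theorem eq_zero_of_maximal {p : Submodule ℂ H × Submodule ℂ H}
    (hp : Maximal (· ∈ {p | M.IsOrthoPair p}) p) {y : H →L[ℂ] H} (hy : y ∈ M)
    (hyy : y * y = 0) (hfy : closureProj (M.cyclicClosure p.1) * y = 0) : y = 0 := by
  obtain ⟨hi1, hi2, hort, hle1, hle2⟩ := hp.1
  have hfy' : closureProj (M.cyclicClosure p.1) * star y = 0 := by
    have := congr(star $hfy)
    rwa [star_mul, star_zero, (closureProj_isStarProjection _).isSelfAdjoint.star_eq,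
      ← (closureProj_cyclicClosure_commute (star_mem hy)).eq] at this
  have o1 := isOrtho_range_of_closureProj_mul_eq_zero hfy
  have o2 := isOrtho_range_of_closureProj_mul_eq_zero hfy'
  have key : M.IsOrthoPair (p.1 ⊔ y.range, p.2 ⊔ (star y).range) := by
    refine ⟨hi1.sup (isInvariant_range hy), hi2.sup (isInvariant_range (star_mem hy)), ?_, ?_, ?_⟩
    · rw [Submodule.isOrtho_sup_left, Submodule.isOrtho_sup_right, Submodule.isOrtho_sup_right]
      refine ⟨⟨hort, (o2.mono_right le_cyclicClosure).symm⟩, o1.mono_right hle2, ?_⟩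
      rw [Submodule.isOrtho_iff_inner_eq]
      rintro _ ⟨v, rfl⟩ _ ⟨w, rfl⟩
      have : y (y v) = 0 := congr($hyy v)
      simp [ContinuousLinearMap.star_eq_adjoint, ContinuousLinearMap.adjoint_inner_right, this]
    · exact sup_le (hle1.trans (cyclicClosure_mono le_sup_left))
        ((range_le_cyclicClosure_range_star hy).trans (cyclicClosure_mono le_sup_right))
    · refine sup_le (hle2.trans (cyclicClosure_mono le_sup_left))
        ((range_le_cyclicClosure_range_star (star_mem hy)).trans ?_)
      rw [star_star]
      exact cyclicClosure_mono le_sup_right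
  have hle := hp.2 key ⟨le_sup_left, le_sup_left⟩
  ext v
  have hv : y v ∈ M.cyclicClosure p.1 := le_cyclicClosure (hle.1 (le_sup_right (a := p.1) ⟨v, rfl⟩))
  rw [← closureProj_cyclicClosure_eq_self_iff.mpr hv]
  exact congr($hfy v)

theorem mul_commutator_eq_of_maximal {p : Submodule ℂ H × Submodule ℂ H}
    (hp : Maximal (· ∈ {p | M.IsOrthoPair p}) p) {x y : H →L[ℂ] H} (hx : x ∈ M) (hy : y ∈ M) :
    closureProj (M.cyclicClosure p.1) * (x * y - y * x) = x * y - y * x := by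
  set f := closureProj (M.cyclicClosure p.1) with hf
  have hfM : f ∈ M := M.closureProj_mem hp.1.invariant_fst.cyclicClosure
  have hfi : f * f = f := (closureProj_isStarProjection _).isIdempotentElem.eq
  have hfs : star f = f := (closureProj_isStarProjection _).isSelfAdjoint.star_eq
  have hfc : ∀ a ∈ M, f * a = a * f := fun a ha => (closureProj_cyclicClosure_commute ha).eq
  have hgM : 1 - f ∈ M := sub_mem (one_mem M) hfM
  have hgc : ∀ a ∈ M, (1 - f) * a = a * (1 - f) := fun a ha => by
    rw [sub_mul, mul_sub, one_mul, mul_one, hfc a ha]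
  have hfg : f * (1 - f) = 0 := by rw [mul_sub, mul_one, hfi, sub_self]
  have corner : ∀ E ∈ M, IsStarProjection E → ∀ w ∈ M, (1 - f) * ((1 - E) * w * E) = 0 := by
    intro E hEM hE w hw
    have hmem : (1 - E) * w * E ∈ M := mul_mem (mul_mem (sub_mem (one_mem M) hEM) hw) hEM
    refine eq_zero_of_maximal hp (mul_mem hgM hmem) ?_ ?_
    · have h0 : E * (1 - E) = 0 := by rw [mul_sub, mul_one, hE.isIdempotentElem.eq, sub_self]
      rw [hgc _ hmem, mul_assoc, ← mul_assoc (1 - f) ((1 - E) * w * E), hgc _ hmem]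
      have : (1 - E) * w * E * ((1 - E) * w * E) = (1 - E) * w * (E * (1 - E)) * w * E := by
        noncomm_ring
      rw [mul_assoc _ (1 - f), ← mul_assoc, this, h0]
      simp
    · rw [← mul_assoc, ← hf, hfg, zero_mul]
  have comm : ∀ E ∈ M, IsStarProjection E → Commute E ((1 - f) * y) := by
    intro E hEM hE
    have h1 := corner E hEM hE y hy
    have h2 := congr(star $(corner E hEM hE _ (star_mem hy)))
    simp only [star_mul, star_sub, star_one, star_star, star_zero, hfs,
      hE.isSelfAdjoint.star_eq] at h2
    rw [← hgc _ (mul_mem hEM (mul_mem hy (sub_mem (one_mem M) hEM)))] at h2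
    rw [commute_iff_eq, ← mul_assoc, ← hgc E hEM, mul_assoc, mul_assoc, ← sub_eq_zero, ← mul_sub]
    have : E * y - y * E = E * (y * (1 - E)) - (1 - E) * y * E := by noncomm_ring
    rw [this, mul_sub, h1, h2, sub_zero]
  have h := (M.commute_of_forall_projection hx comm).eq
  rw [← mul_assoc, ← hgc x hx, mul_assoc, mul_assoc, ← sub_eq_zero, ← mul_sub, sub_mul, one_mul,
    sub_eq_zero] at h
  exact h.symm

section Corner

variable {e f : H →L[ℂ] H}

theorem inner_sum_corner (he : IsStarProjection e) {x : H →L[ℂ] H}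
    (hx : ∀ m ∈ M, Commute x (e * m * e)) {s : Finset M} (φ : M → H) :
    inner ℂ (∑ m ∈ s, m.1 (e (x (φ m)))) (∑ m ∈ s, m.1 (e (x (φ m)))) =
      ∑ n ∈ s, ∑ m ∈ s, inner ℂ (φ n) ((star x * x) ((e * (star n.1 * m.1) * e) (φ m))) := by
  simp_rw [sum_inner, inner_sum]
  refine Finset.sum_congr rfl fun n _ => Finset.sum_congr rfl fun m _ => ?_
  have h1 : ∀ v, n.1 (e (x v)) = (n.1 * e * x) v := fun v => rfl
  rw [h1, ← ContinuousLinearMap.adjoint_inner_right, ← ContinuousLinearMap.star_eq_adjoint,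
    star_mul, star_mul, he.isSelfAdjoint.star_eq]
  have h2 : star x * x * (e * (star n.1 * m.1) * e) = star x * (e * (star n.1 * m.1) * e) * x := by
    rw [mul_assoc, (hx _ (mul_mem (star_mem n.2) m.2)).eq, ← mul_assoc]
  exact congr(inner ℂ (φ n) ($(h2.symm) (φ m)))

theorem norm_sum_corner_le (he : IsStarProjection e) {c : H →L[ℂ] H} (hec : e * c = c)
    (hc : ∀ m ∈ M, Commute c (e * m * e)) (s : Finset M) (φ : M → H) :
    ‖∑ m ∈ s, m.1 (c (φ m))‖ ≤ ‖c‖ * ‖∑ m ∈ s, m.1 (e (φ m))‖ := by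
  have hc' : ∀ m ∈ M, Commute (star c) (e * m * e) := fun m hm => by
    have := (hc _ (star_mem hm)).star_star
    simpa [star_mul, he.isSelfAdjoint.star_eq, mul_assoc] using this
  set a : H →L[ℂ] H := algebraMap ℝ _ (‖c‖ ^ 2) - star c * c with ha
  have ha0 : 0 ≤ a := sub_nonneg.mpr CStarAlgebra.star_mul_le_algebraMap_norm_sq
  set d := CFC.sqrt a
  have hdd : star d * d = a := by
    rw [(CFC.sqrt_nonneg a).isSelfAdjoint.star_eq, CFC.sqrt_mul_sqrt_self a ha0]
  have hdc : ∀ m ∈ M, Commute d (e * m * e) := fun m hm =>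
    Commute.cfcₙ_nnreal (Commute.sub_left (Algebra.commutes (‖c‖ ^ 2) (e * m * e))
      ((hc' m hm).mul_left (hc m hm))) _
  have i1 := inner_sum_corner he hc (s := s) φ
  have i2 := inner_sum_corner he hdc (s := s) φ
  have i3 := inner_sum_corner (M := M) (x := 1) he (fun m _ => .one_left _) (s := s) φ
  have hsum : ∀ v : H, (star c * c) v + (star d * d) v = ((‖c‖ ^ 2 : ℝ) : ℂ) • v := fun v => by
    rw [← add_apply, hdd, ha, add_sub_cancel, Algebra.algebraMap_eq_smul_one, Complex.coe_smul]
    rfl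
  have hec' : ∀ v, e (c v) = c v := fun v => congr($hec v)
  have key : inner ℂ (∑ m ∈ s, m.1 (c (φ m))) (∑ m ∈ s, m.1 (c (φ m))) +
      inner ℂ (∑ m ∈ s, m.1 (e (d (φ m)))) (∑ m ∈ s, m.1 (e (d (φ m)))) =
      ((‖c‖ ^ 2 : ℝ) : ℂ) *
        inner ℂ (∑ m ∈ s, m.1 (e (φ m))) (∑ m ∈ s, m.1 (e (φ m))) := by
    simp only [hec'] at i1
    simp only [one_apply_eq_self, star_one, mul_one] at i3
    rw [i1, i2, i3]
    simp_rw [Finset.mul_sum, ← Finset.sum_add_distrib, ← inner_add_right, hsum, inner_smul_right]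
  simp only [inner_self_eq_norm_sq_to_K] at key
  have key' : ‖∑ m ∈ s, m.1 (c (φ m))‖ ^ 2 + ‖∑ m ∈ s, m.1 (e (d (φ m)))‖ ^ 2 =
      ‖c‖ ^ 2 * ‖∑ m ∈ s, m.1 (e (φ m))‖ ^ 2 := by
    apply Complex.ofReal_injective
    push_cast
    simpa using key
  refine (abs_le_of_sq_le_sq' ?_ (by positivity)).2
  rw [mul_pow, ← key']
  exact le_add_of_nonneg_right (by positivity)

theorem eq_of_eq_on_cyclic {A B : H →L[ℂ] H} (hcyc : ∀ v, f v ∈ M.cyclicClosure e.range)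
    (h1 : ∀ m ∈ M, ∀ v, A (m (e v)) = B (m (e v)))
    (h2 : ∀ v, A ((1 - f) v) = B ((1 - f) v)) : A = B := by
  have hle : M.cyclicClosure e.range ≤ (A - B).ker := by
    refine cyclicClosure_le (A - B).isClosed_ker ?_
    rintro m hm _ ⟨v, rfl⟩
    simpa [sub_eq_zero] using h1 m hm v
  ext v
  have hv : v = f v + (1 - f) v := by simp
  have h3 : A (f v) = B (f v) := by simpa [sub_eq_zero] using hle (hcyc v)
  rw [hv, map_add, map_add, h2, h3]

/-- The induction of a central element of a corner to a central element of the algebra. -/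
theorem exists_central_of_corner {c : H →L[ℂ] H} (heM : e ∈ M) (he : IsStarProjection e)
    (hfM : f ∈ M) (hf : IsStarProjection f) (hfc : ∀ m ∈ M, f * m = m * f) (hfe : f * e = e)
    (hcyc : ∀ v, f v ∈ M.cyclicClosure e.range) (hcM : c ∈ M) (hec : e * c = c)
    (hc : ∀ m ∈ M, Commute c (e * m * e)) :
    ∃ z ∈ M, (∀ m ∈ M, z * m = m * z) ∧ z * e = c := by
  let T : (M →₀ H) × H →ₗ[ℂ] H :=
    (Finsupp.lsum ℂ fun m : M => ((m.1 * e : H →L[ℂ] H) : H →ₗ[ℂ] H)).coprod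
      ((1 - f : H →L[ℂ] H) : H →ₗ[ℂ] H)
  let S : (M →₀ H) × H →ₗ[ℂ] H :=
    (Finsupp.lsum ℂ fun m : M => ((m.1 * c : H →L[ℂ] H) : H →ₗ[ℂ] H)).coprod 0
  have hTs : ∀ m v, T (Finsupp.single m v, 0) = m.1 (e v) := fun m v => by simp [T]
  have hSs : ∀ m v, S (Finsupp.single m v, 0) = m.1 (c v) := fun m v => by simp [S]
  have hT0 : ∀ v, T (0, v) = (1 - f) v := fun v => by simp [T]
  have hS0 : ∀ v, S (0, v) = 0 := fun v => by simp [S]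
  have hdense : DenseRange T := by
    have hle : M.cyclicClosure e.range ≤ T.range.topologicalClosure := by
      refine cyclicClosure_le (Submodule.isClosed_topologicalClosure _) ?_
      rintro m hm _ ⟨v, rfl⟩
      exact Submodule.le_topologicalClosure _ ⟨(Finsupp.single ⟨m, hm⟩ v, 0), hTs _ _⟩
    intro v
    have hv : v = f v + (1 - f) v := by simp
    have : v ∈ T.range.topologicalClosure := by
      rw [hv]
      exact add_mem (hle (hcyc v)) (Submodule.le_topologicalClosure _ ⟨(0, v), hT0 v⟩)
    exact this
  have hnorm : ∀ x, ‖S x‖ ≤ ‖c‖ * ‖T x‖ := by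
    rintro ⟨φ, ξ⟩
    have hS : S (φ, ξ) = ∑ m ∈ φ.support, m.1 (c (φ m)) := by simp [S, Finsupp.sum]
    have hT : f (T (φ, ξ)) = ∑ m ∈ φ.support, m.1 (e (φ m)) := by
      have h1 : f ((1 - f) ξ) = 0 := by
        rw [← mul_apply_eq_comp, mul_sub, mul_one, hf.isIdempotentElem.eq, sub_self]
        rfl
      have h2 : ∀ m : M, ∀ v, f (m.1 (e v)) = m.1 (e v) := fun m v => by
        have : f * m.1 * e = m.1 * e := by rw [hfc m.1 m.2, mul_assoc, hfe]
        exact congr($this v)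
      have : T (φ, ξ) = ∑ m ∈ φ.support, m.1 (e (φ m)) + (1 - f) ξ := by
        simp [T, Finsupp.sum]
      rw [this, map_add, map_sum, h1, add_zero]
      simp_rw [h2]
    rw [hS]
    refine (norm_sum_corner_le he hec hc φ.support φ).trans ?_
    rw [← hT]
    gcongr
    have := hf.norm_mul_le 1
    have h1 := f.le_opNorm (T (φ, ξ))
    have h2 : ‖f‖ ≤ 1 := by
      rw [one_mul] at this
      exact this.trans ContinuousLinearMap.norm_id_le
    exact h1.trans (mul_le_of_le_one_left (norm_nonneg _) h2)
  set W : H →L[ℂ] H := S.extendOfNorm T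
  have hWT : ∀ x, W (T x) = S x := LinearMap.extendOfNorm_eq hdense ⟨‖c‖, hnorm⟩
  have hW1 : ∀ m ∈ M, ∀ v, W (m (e v)) = m (c v) := fun m hm v => by
    rw [← hTs ⟨m, hm⟩ v, hWT, hSs]
  have hW0 : ∀ v, W ((1 - f) v) = 0 := fun v => by rw [← hT0, hWT, hS0]
  refine ⟨W, ?_, ?_, ?_⟩
  · rw [← M.commutant_commutant, mem_commutant_iff]
    intro y hy
    rw [mem_commutant_iff] at hy
    have hy' : ∀ m ∈ M, ∀ v, m (y v) = y (m v) := fun m hm v => congr($(hy m hm) v)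
    refine eq_of_eq_on_cyclic hcyc (fun m hm v => ?_) fun v => ?_
    · simp only [mul_apply_eq_comp]
      rw [hW1 m hm, ← hy' m hm (e v), ← hy' e heM, hW1 m hm, hy' c hcM, hy' m hm]
    · simp only [mul_apply_eq_comp]
      rw [hW0, ← hy' _ (sub_mem (one_mem M) hfM), hW0, map_zero]
  · intro a ha
    refine eq_of_eq_on_cyclic hcyc (fun m hm v => ?_) fun v => ?_
    · simp only [mul_apply_eq_comp]
      rw [hW1 m hm]
      exact hW1 (a * m) (mul_mem ha hm) v
    · have : a ((1 - f) v) = (1 - f) (a v) := by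
        have : a * (1 - f) = (1 - f) * a := by rw [mul_sub, sub_mul, hfc a ha, mul_one, one_mul]
        exact congr($this v)
      simp only [mul_apply_eq_comp]
      rw [hW0, this, hW0, map_zero]
  · ext v
    exact hW1 1 (one_mem M) v

theorem eq_zero_of_commute_star_of_sq {c : H →L[ℂ] H} (hc : Commute c (star c)) (h : c * c = 0) :
    c = 0 := by
  rw [← CStarRing.star_mul_self_eq_zero_iff, ← CStarRing.star_mul_self_eq_zero_iff, star_mul,
    star_star, mul_assoc, ← mul_assoc c, hc.eq, mul_assoc (star c), h]
  simp

theorem exists_peirce_projections (M : VonNeumannAlgebra H) :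
    ∃ f ∈ M, ∃ p ∈ M, IsStarProjection f ∧ IsStarProjection p ∧ (∀ m ∈ M, f * m = m * f) ∧
      f * p = p ∧ p * f = p ∧ (∀ v, f v ∈ M.cyclicClosure p.range) ∧
      (∀ v, f v ∈ M.cyclicClosure (f - p).range) ∧
      ∀ x ∈ M, ∀ y ∈ M, f * (x * y - y * x) = x * y - y * x := by
  obtain ⟨⟨P, Q⟩, hmax⟩ := M.exists_maximal_isOrthoPair
  have hpair := hmax.1
  obtain ⟨hP, hQ, hort, hPQ, hQP⟩ := hpair
  have hf := closureProj_isStarProjection (M.cyclicClosure P)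
  have hp := closureProj_isStarProjection P
  have hpc : ∀ v ∈ P, closureProj P v = v := fun v hv =>
    Submodule.starProjection_eq_self_iff.mpr (Submodule.le_topologicalClosure _ hv)
  have hfp : closureProj (M.cyclicClosure P) * closureProj P = closureProj P := by
    ext v
    exact closureProj_cyclicClosure_eq_self_iff.mpr (Submodule.topologicalClosure_minimal _
      le_cyclicClosure isClosed_cyclicClosure (Submodule.starProjection_apply_mem _ v))
  refine ⟨_, M.closureProj_mem hP.cyclicClosure, _, M.closureProj_mem hP, hf, hp,
    fun m hm => (closureProj_cyclicClosure_commute hm).eq, hfp, ?_, fun v => ?_, fun v => ?_,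
    fun x hx y hy => mul_commutator_eq_of_maximal hmax hx hy⟩
  · have := congr(star $hfp)
    rwa [star_mul, hf.isSelfAdjoint.star_eq, hp.isSelfAdjoint.star_eq] at this
  · exact cyclicClosure_mono (Q := (closureProj P).range) (fun w hw => ⟨w, hpc w hw⟩)
      (closureProj_cyclicClosure_apply_mem v)
  · have hle : Q ≤ (closureProj (M.cyclicClosure P) - closureProj P).range := fun q hq => by
      refine ⟨q, ?_⟩
      have h0 : closureProj P q = 0 := by
        rw [Submodule.starProjection_apply_eq_zero_iff, Submodule.orthogonal_closure]
        exact (Submodule.isOrtho_iff_le.mp hort.symm) hq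
      have h1 := closureProj_cyclicClosure_eq_self_iff.mpr (hQP hq)
      change closureProj (M.cyclicClosure P) q - closureProj P q = q
      rw [h0, h1, sub_zero]
    exact cyclicClosure_mono hle (cyclicClosure_le_cyclicClosure hPQ
      (closureProj_cyclicClosure_apply_mem v))

end Corner

theorem exists_peircePair (M : VonNeumannAlgebra H) :
    ∃ (f : M.toStarSubalgebra) (e : Bool → M.toStarSubalgebra), PeircePair f e ∧
      ∀ x y, f * (x * y - y * x) = x * y - y * x := by
  obtain ⟨f, hfM, p, hpM, hf, hp, hfc, hfp, hpf, hcp, hcq, hab⟩ := M.exists_peirce_projections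
  have hff := hf.isIdempotentElem.eq
  have hpp := hp.isIdempotentElem.eq
  let e : Bool → M.toStarSubalgebra := fun i => cond i ⟨p, hpM⟩ ⟨f - p, sub_mem hfM hpM⟩
  have he : ∀ i, IsStarProjection (e i).1 := by
    rintro (_ | _)
    · refine ⟨?_, hf.isSelfAdjoint.sub hp.isSelfAdjoint⟩
      change (f - p) * (f - p) = f - p
      rw [mul_sub, sub_mul, sub_mul, hff, hpp, hfp, hpf]
      abel
    · exact hp
  have hfe : ∀ i, f * (e i).1 = (e i).1 := by
    rintro (_ | _)
    · change f * (f - p) = f - p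
      rw [mul_sub, hff, hfp]
    · exact hfp
  have hcyc : ∀ i v, f v ∈ M.cyclicClosure (e i).1.range := by
    rintro (_ | _)
    · exact hcq
    · exact hcp
  refine ⟨⟨f, hfM⟩, e, ⟨fun x => Subtype.ext (hfc x.1 x.2), fun i =>
    Subtype.ext (he i).isIdempotentElem.eq, ?_, ?_, ?_, ?_, ?_⟩,
    fun x y => Subtype.ext (hab x.1 x.2 y.1 y.2)⟩
  · rintro (_ | _) <;> apply Subtype.ext
    · change (f - p) * p = 0
      rw [sub_mul, hfp, hpp, sub_self]
    · change p * (f - p) = 0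
      rw [mul_sub, hpf, hpp, sub_self]
  · rintro (_ | _) <;> apply Subtype.ext
    · exact sub_add_cancel f p
    · exact add_sub_cancel p f
  · intro i x hx
    apply Subtype.ext
    ext v
    have hle : M.cyclicClosure (e i).1.range ≤ x.1.ker := by
      refine cyclicClosure_le x.1.isClosed_ker ?_
      rintro m hm _ ⟨w, rfl⟩
      exact congr(($(hx ⟨m, hm⟩)).1 w)
    exact hle (hcyc i v)
  · intro i c hec _ hc
    obtain ⟨z, hzM, hz, hze⟩ := exists_central_of_corner (e i).2 (he i) hfM hf hfc (hfe i)
      (hcyc i) c.2 congr(($hec).1) fun m hm => congr(($(hc ⟨m, hm⟩)).1)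
    exact ⟨⟨z, hzM⟩, fun x => Subtype.ext (hz x.1 x.2), Subtype.ext hze⟩
  · intro c hc hcc
    exact Subtype.ext (eq_zero_of_commute_star_of_sq congr(($(hc (star c))).1) congr(($hcc).1))

end VonNeumannAlgebra

/-- (Miers) Every Lie derivation `L` of a von Neumann algebra `M` decomposes as
`L = D + λ` with `D` an associative derivation and `λ` a center-valued linear map
vanishing on commutators. -/
theorem miers_lie_derivation (H : Type*) [NormedAddCommGroup H] [InnerProductSpace ℂ H]
    [CompleteSpace H] (M : VonNeumannAlgebra H)
    (L : M.toStarSubalgebra →ₗ[ℂ] M.toStarSubalgebra)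
    (hL : ∀ x y : M.toStarSubalgebra,
      L (x * y - y * x) = (L x * y - y * L x) + (x * L y - L y * x)) :
    ∃ D lam : M.toStarSubalgebra →ₗ[ℂ] M.toStarSubalgebra,
      (∀ x y : M.toStarSubalgebra, D (x * y) = D x * y + x * D y) ∧
      (∀ x z : M.toStarSubalgebra, lam x * z = z * lam x) ∧
      (∀ x y : M.toStarSubalgebra, lam (x * y - y * x) = 0) ∧
      L = D + lam := by
  obtain ⟨f, e, h, hab⟩ := M.exists_peircePair
  exact h.exists_decomposition hL hab
end

section
/- (First Whitehead lemma) Let L be a finite-dimensional semisimple Lie algebra over a field of characteristic 0 and let M be a finite-dimensional L-module. Then every linear map f : L → M satisfying f([x, y]) = x·f(y) − y·f(x) for all x, y ∈ L is of the form f(x) = x·m for some fixed m ∈ M (i.e., H¹(L, M) = 0: every 1-cocycle is a coboundary). -/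
open LieAlgebra LieModule Module

section DualBases

variable {K L V M ι : Type*} [Field K] [LieRing L]
  [AddCommGroup V] [Module K V] [LieRingModule L V]
  [AddCommGroup M] [Module K M] [Fintype ι] [DecidableEq ι]

/-- The canonical element `∑ i, eᵢ ⊗ eⁱ` attached to a pair of bases dual with respect to an
invariant form is annihilated by the Lie algebra. -/
lemma LinearMap.BilinForm.lieInvariant.sum_lie_dualBasis_eq_zero
    {B : LinearMap.BilinForm K V} (hinv : B.lieInvariant L)
    (hB : B.Nondegenerate) (hsymm : B.IsSymm) (b : Basis ι K V)
    (g : V →ₗ[K] V →ₗ[K] M) (x : L) :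
    ∑ i, (g ⁅x, b i⁆ (B.dualBasis hB b i) + g (b i) ⁅x, B.dualBasis hB b i⁆) = 0 := by
  set d := B.dualBasis hB b with hd
  have h₁ : ∀ v, v = ∑ j, B v (d j) • b j := fun v ↦ by
    conv_lhs => rw [← b.sum_repr v]
    refine Finset.sum_congr rfl fun j _ ↦ ?_
    rw [← B.dualBasis_repr_apply hB d v j, hd, B.dualBasis_dualBasis hB hsymm]
  have h₂ : ∀ v, v = ∑ j, B v (b j) • d j := fun v ↦ by
    conv_lhs => rw [← d.sum_repr v]
    simp only [hd, B.dualBasis_repr_apply]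
  have e₁ : ∀ i, g ⁅x, b i⁆ (d i) = ∑ j, B ⁅x, b i⁆ (d j) • g (b j) (d i) := fun i ↦ by
    conv_lhs => rw [h₁ ⁅x, b i⁆]
    simp
  have e₂ : ∀ i, g (b i) ⁅x, d i⁆ = ∑ j, B ⁅x, d i⁆ (b j) • g (b i) (d j) := fun i ↦ by
    conv_lhs => rw [h₂ ⁅x, d i⁆]
    simp
  rw [Finset.sum_add_distrib, Finset.sum_congr rfl fun i _ ↦ e₁ i,
    Finset.sum_congr rfl fun i _ ↦ e₂ i, Finset.sum_comm, ← Finset.sum_add_distrib]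
  refine Finset.sum_eq_zero fun i _ ↦ ?_
  rw [← Finset.sum_add_distrib]
  refine Finset.sum_eq_zero fun j _ ↦ ?_
  rw [← add_smul, hinv, hsymm.eq ⁅x, d i⁆]
  simp

end DualBases

section Cocycles

variable {K L M : Type*} [Field K] [LieRing L] [LieAlgebra K L] [Module.Finite K L]
  [AddCommGroup M] [Module K M] [LieRingModule L M] [LieModule K L M]

/-- A Lie algebra with non-degenerate Killing form is perfect. -/
lemma LieAlgebra.IsKilling.derivedSeries_one_eq_top [IsKilling K L] :
    derivedSeries K L 1 = ⊤ := by
  set D : LieIdeal K L := derivedSeries K L 1 with hD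
  have hc := D.isCompl_killingCompl
  have hab : IsLieAbelian D.killingCompl := by
    rw [LieSubmodule.lie_abelian_iff_lie_self_eq_bot, eq_bot_iff, ← hc.inf_eq_bot]
    refine le_inf ?_ (LieSubmodule.lie_le_left _ _)
    exact LieSubmodule.mono_lie le_top le_top
  rw [IsKilling.ideal_eq_bot_of_isLieAbelian D.killingCompl] at hc
  exact eq_top_of_isCompl_bot hc

variable [Module.Finite K M]

/-- An irreducible module with vanishing trace form over a semisimple Lie algebra in
characteristic zero is trivial. -/
lemma LieModule.isTrivial_of_traceForm_eq_zero [CharZero K] [IsKilling K L]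
    [IsIrreducible K L M] (h : traceForm K L M = 0) : IsTrivial L M := by
  have hn : LieModule.IsNilpotent L M := by
    rw [LieModule.isNilpotent_iff_forall' (R := K)]
    intro x
    have hx : x ∈ derivedSeries K L 1 :=
      IsKilling.derivedSeries_one_eq_top (K := K) (L := L) ▸ LieSubmodule.mem_top x
    exact (LieModule.isNilpotent_iff_forall' (R := K)).mp
      (isNilpotent_derivedSeries_of_traceForm_eq_zero h) ⟨x, hx⟩
  have : Nontrivial M := nontrivial_of_isIrreducible K L M
  have : Nontrivial (maxTrivSubmodule K L M) := nontrivial_max_triv_of_isNilpotent K L M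
  rw [LieModule.isTrivial_iff_max_triv_eq_top K]
  exact LieSubmodule.eq_top_of_isIrreducible K L M _

/-- If the trace form of a module is non-degenerate on a nonzero ideal and the module is
irreducible, then every cocycle is inner. -/
lemma LieModule.exists_eq_lie_of_traceForm_restrict_nondegenerate [CharZero K]
    [IsIrreducible K L M] (J : LieIdeal K L) (hJ : J ≠ ⊥)
    (hB : ((traceForm K L M).restrict J.toSubmodule).Nondegenerate)
    (f : L →ₗ[K] M) (hf : ∀ x y : L, f ⁅x, y⁆ = ⁅x, f y⁆ - ⁅y, f x⁆) :
    ∃ m : M, ∀ x : L, f x = ⁅x, m⁆ := by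
  let B : LinearMap.BilinForm K J := (traceForm K L M).restrict J.toSubmodule
  have hsymm : B.IsSymm := ⟨fun x y ↦ traceForm_comm K L M x y⟩
  have hinv : B.lieInvariant L := fun x y z ↦ traceForm_lieInvariant K L M x y z
  let b := finBasis K J
  let d := B.dualBasis hB b
  -- the Casimir operator
  let Ω : End K M := ∑ i, toEnd K L M (b i) ∘ₗ toEnd K L M (d i)
  have hΩ : ∀ m, Ω m = ∑ i, ⁅(b i : L), ⁅(d i : L), m⁆⁆ := fun m ↦ by
    simp [Ω, LinearMap.sum_apply]
  have hcomm : ∀ (x : L) (m : M), Ω ⁅x, m⁆ = ⁅x, Ω m⁆ := fun x m ↦ by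
    let g : J →ₗ[K] J →ₗ[K] M :=
      LinearMap.mk₂ K (fun u v ↦ ⁅(u : L), ⁅(v : L), m⁆⁆) (by simp) (by simp) (by simp) (by simp)
    have := hinv.sum_lie_dualBasis_eq_zero hB hsymm b g x
    rw [hΩ, hΩ, lie_sum, eq_comm, ← sub_eq_zero, ← Finset.sum_sub_distrib, ← this]
    refine Finset.sum_congr rfl fun i _ ↦ ?_
    simp [g, d]
  have htrace : LinearMap.trace K M Ω ≠ 0 := by
    have : LinearMap.trace K M Ω = finrank K J := by
      have h : ∀ i, LinearMap.trace K M (toEnd K L M (b i) ∘ₗ toEnd K L M (d i)) = 1 := fun i ↦ by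
        have := B.apply_dualBasis_right hB hsymm b i i
        rwa [if_pos rfl] at this
      simp [Ω, h]
    rw [this]
    have : Nontrivial J := (LieSubmodule.nontrivial_iff_ne_bot K L L).mpr hJ
    exact_mod_cast (finrank_pos (R := K) (M := J)).ne'
  have hinj : LinearMap.ker Ω = ⊥ := by
    let N : LieSubmodule K L M :=
      { LinearMap.ker Ω with
        lie_mem := fun {x m} (hm : Ω m = 0) ↦ show Ω ⁅x, m⁆ = 0 by rw [hcomm, hm, lie_zero] }
    rcases eq_bot_or_eq_top N with h | h
    · exact congr_arg LieSubmodule.toSubmodule h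
    · refine absurd ?_ htrace
      have : LinearMap.ker Ω = ⊤ := congr_arg LieSubmodule.toSubmodule h
      rw [LinearMap.ker_eq_top.mp this, map_zero]
  obtain ⟨m, hm⟩ := LinearMap.injective_iff_surjective.mp (LinearMap.ker_eq_bot.mp hinj)
    (∑ i, ⁅(b i : L), f (d i)⁆)
  refine ⟨m, fun x ↦ LinearMap.ker_eq_bot.mp hinj ?_⟩
  let g : J →ₗ[K] J →ₗ[K] M :=
    LinearMap.mk₂ K (fun u v ↦ ⁅(u : L), f v⁆) (by simp) (by simp) (by simp) (by simp)
  have := hinv.sum_lie_dualBasis_eq_zero hB hsymm b g x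
  rw [hcomm, hm, hΩ, lie_sum, eq_comm, ← sub_eq_zero, ← Finset.sum_sub_distrib, ← this]
  refine Finset.sum_congr rfl fun i _ ↦ ?_
  simp [g, d, hf]

/-- Every cocycle with values in an irreducible module over a semisimple Lie algebra in
characteristic zero is inner. -/
lemma LieModule.exists_eq_lie_of_isIrreducible [CharZero K] [IsKilling K L]
    [IsIrreducible K L M] (f : L →ₗ[K] M)
    (hf : ∀ x y : L, f ⁅x, y⁆ = ⁅x, f y⁆ - ⁅y, f x⁆) :
    ∃ m : M, ∀ x : L, f x = ⁅x, m⁆ := by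
  let R : LieIdeal K L :=
    InvariantForm.orthogonal (traceForm K L M) (traceForm_lieInvariant K L M) ⊤
  have hR : ∀ y, y ∈ R ↔ ∀ x, traceForm K L M x y = 0 := fun y ↦ by
    simp [R, InvariantForm.mem_orthogonal]
  have hc := R.isCompl_killingCompl
  by_cases hJ : R.killingCompl = ⊥
  · rw [hJ] at hc
    have htriv : IsTrivial L M := isTrivial_of_traceForm_eq_zero (K := K) <| by
      ext x y
      exact (hR y).mp (eq_top_of_isCompl_bot hc ▸ LieSubmodule.mem_top y) x
    refine ⟨0, fun x ↦ ?_⟩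
    have hle : (derivedSeries K L 1).toSubmodule ≤ LinearMap.ker f := by
      change (⁅(⊤ : LieIdeal K L), (⊤ : LieIdeal K L)⁆ : LieIdeal K L).toSubmodule ≤ _
      rw [LieSubmodule.lieIdeal_oper_eq_linear_span', Submodule.span_le]
      rintro _ ⟨u, -, v, -, rfl⟩
      rw [SetLike.mem_coe, LinearMap.mem_ker, hf, trivial_lie_zero, trivial_lie_zero, sub_zero]
    rw [IsKilling.derivedSeries_one_eq_top] at hle
    simpa using hle (Submodule.mem_top (x := x))
  · refine exists_eq_lie_of_traceForm_restrict_nondegenerate _ hJ ?_ f hf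
    have hrefl : ((traceForm K L M).restrict R.killingCompl.toSubmodule).IsRefl :=
      fun x y h ↦ (traceForm_comm K L M y x).trans h
    refine hrefl.nondegenerate_iff_separatingLeft.mpr fun u hu ↦ ?_
    have huR : (u : L) ∈ R := (hR u).mpr fun x ↦ by
      have hx : x ∈ R ⊔ R.killingCompl := hc.sup_eq_top ▸ LieSubmodule.mem_top x
      obtain ⟨r, hr, j, hj, rfl⟩ := (LieSubmodule.mem_sup _ _ _).mp hx
      have h₁ := (hR r).mp hr u
      have h₂ : traceForm K L M u j = 0 := hu ⟨j, hj⟩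
      rw [traceForm_comm, map_add, h₁, h₂, add_zero]
    have : (u : L) ∈ R ⊓ R.killingCompl := ⟨huR, u.2⟩
    rw [hc.inf_eq_bot, LieSubmodule.mem_bot] at this
    exact Subtype.ext this

end Cocycles

/-- (First Whitehead lemma) For a finite-dimensional semisimple Lie algebra `L` over a
field of characteristic 0 and a finite-dimensional `L`-module `M`, every 1-cocycle
`f : L → M` (i.e. `f ⁅x, y⁆ = x • f y − y • f x`) is a coboundary: `f x = x • m` for
some fixed `m ∈ M`. -/
theorem first_whitehead_lemma (K L M : Type*) [Field K] [CharZero K]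
    [LieRing L] [LieAlgebra K L] [Module.Finite K L] [LieAlgebra.HasTrivialRadical K L]
    [AddCommGroup M] [Module K M] [LieRingModule L M] [LieModule K L M] [Module.Finite K M]
    (f : L →ₗ[K] M)
    (hf : ∀ x y : L, f ⁅x, y⁆ = ⁅x, f y⁆ - ⁅y, f x⁆) :
    ∃ m : M, ∀ x : L, f x = ⁅x, m⁆ := by
  induction hn : finrank K M using Nat.strong_induction_on generalizing M with
  | _ n ih =>
  rcases subsingleton_or_nontrivial M with hM | hM
  · exact ⟨0, fun x ↦ Subsingleton.elim _ _⟩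
  by_cases hirr : ∀ N : LieSubmodule K L M, N ≠ ⊥ → N = ⊤
  · have := LieModule.IsIrreducible.mk hirr
    exact exists_eq_lie_of_isIrreducible f hf
  push Not at hirr
  obtain ⟨N, hbot, htop⟩ := hirr
  have hNpos : 0 < finrank K N := by
    have : Nontrivial N := (LieSubmodule.nontrivial_iff_ne_bot K L M).mpr hbot
    exact finrank_pos
  have hNlt : finrank K N < finrank K M :=
    Submodule.finrank_lt (s := N.toSubmodule) (by simpa using htop)
  have hadd : finrank K (M ⧸ N) + finrank K N = finrank K M :=
    N.toSubmodule.finrank_quotient_add_finrank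
  have : Module.Finite K (M ⧸ N) := inferInstanceAs (Module.Finite K (M ⧸ N.toSubmodule))
  let π : M →ₗ⁅K, L⁆ M ⧸ N := LieSubmodule.Quotient.mk' N
  obtain ⟨q, hq⟩ := ih (finrank K (M ⧸ N)) (by omega) (M ⧸ N) ((π : M →ₗ[K] M ⧸ N) ∘ₗ f)
    (fun x y ↦ by simp [hf]) rfl
  obtain ⟨m₀, rfl⟩ := LieSubmodule.Quotient.surjective_mk' N q
  have hmem : ∀ x, f x - ⁅x, m₀⁆ ∈ N := fun x ↦ by
    rw [← LieSubmodule.Quotient.mk_eq_zero']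
    exact (map_sub π (f x) ⁅x, m₀⁆).trans (sub_eq_zero.mpr (hq x))
  let g : L →ₗ[K] N :=
    (f - (toEnd K L M : L →ₗ[K] End K M).flip m₀).codRestrict N.toSubmodule fun x ↦ hmem x
  have hg : ∀ x, (g x : M) = f x - ⁅x, m₀⁆ := fun x ↦ rfl
  obtain ⟨m₁, hm₁⟩ := ih (finrank K N) (by omega) N g (fun x y ↦ Subtype.ext <| by
    simp [hg, hf]
    abel) rfl
  refine ⟨m₀ + m₁, fun x ↦ ?_⟩
  have := congr_arg (Subtype.val) (hm₁ x)
  rw [hg, LieSubmodule.coe_bracket, sub_eq_iff_eq_add'] at this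
  rw [this, lie_add]
end
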